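/- arXiv:1305.5273 — 2 statements merged into one kernel-verified Lean document; each statement's English description precedes it below -/
import Mathlib

section
/- Let R₀ > 2M and let u be a λ-mode solution whose initial data (φ,ψ) are smooth on (2M,∞) and vanish for r ≥ R₀. Then the rescaled solution extends smoothly to null infinity: there exists V′ : ℝ × ℝ → ℝ that is infinitely differentiable on ℝ × [0, 1/(2M)) (in the sense of ContDiffOn, with all within-derivatives extending continuously up to the boundary {ρ̄ = 0}) and satisfies V′(τ̄,ρ̄) = V(τ̄,ρ̄) for all τ̄ ∈ ℝ and all ρ̄ ∈ (0, 1/(2M)). (Proposition 3.5, for a single spherical-harmonic mode.) -/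
/-!
In the coordinates `(τ, ρ)` the rescaled field `V = u/ρ` of a mode solution satisfies
`2∂_τ∂_ρV + ∂_ρ(ρ²(1-2Mρ)∂_ρV) = (λ² + 2Mρ)V` (`nullV_rescaled`), whose coefficients are smooth up
to `ρ = 0`. It is a transport equation for `∂_ρV` along the ingoing null lines, which emanate from
the region near null infinity at early `τ`; differentiating it `n` times in `ρ` gives a transport
equation for `∂_ρ^{n+1}V` sourced by lower derivatives (`iter_eqn`).

Data vanishing for `r ≥ R₀` force `V` to vanish near null infinity at early `τ`, by the domain of
dependence (`vanishesBefore_of_data`). All the transport equations therefore start from zero, and a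
Grönwall argument with the weight `exp(κτ)` (`gronwall`) bounds `V` and all its `ρ`-derivatives
locally uniformly up to `ρ = 0` (`iter_bounded`); the coupling of `∂_ρV` to `V` itself is handled by
integrating `∂_ρV` outwards at fixed `τ` (`first_bound`).

Since the equation does not depend on `τ`, the derivative `∂_τV` solves it too and has the same
vanishing property (`rescaled_D1`, `vanishes_D1`), so all mixed derivatives are locally bounded.
A family of smooth functions that is stable under both partial derivatives and locally bounded near
`ρ = 0` extends smoothly to `ρ = 0` (`smooth_extension`), and the theorem follows.
-/

open MeasureTheory Filter Set Function
open scoped ContDiff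

/-- The tortoise coordinate `r_* = r + 2M log(r - 2M)`. -/
noncomputable def rstar (M r : ℝ) : ℝ := r + 2*M*Real.log (r - 2*M)

/-- Partial derivative of `u` in the first (time) variable. -/
noncomputable def pdt (u : ℝ → ℝ → ℝ) (t r : ℝ) : ℝ := deriv (fun s => u s r) t

/-- Second partial derivative of `u` in the first (time) variable. -/
noncomputable def pdtt (u : ℝ → ℝ → ℝ) (t r : ℝ) : ℝ := deriv (fun s => pdt u s r) t

/-- Partial derivative of `u` in the second (radial) variable. -/
noncomputable def pdr (u : ℝ → ℝ → ℝ) (t r : ℝ) : ℝ := deriv (fun s => u t s) r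

/-- Second partial derivative of `u` in the second (radial) variable. -/
noncomputable def pdrr (u : ℝ → ℝ → ℝ) (t r : ℝ) : ℝ := deriv (fun s => pdr u t s) r

/-- `u(t,r)` is a λ-mode solution of the wave equation on the mass-`M`
Schwarzschild exterior: it is smooth on `ℝ × (2M,∞)` and satisfies
`−(r/(r−2M))·∂²ₜu + ((r−2M)/r)·∂²ᵣu + (2(r−M)/r²)·∂ᵣu − (λ²/r²)·u = 0` there. -/
def IsModeSolution (M lam : ℝ) (u : ℝ → ℝ → ℝ) : Prop :=
  ContDiffOn ℝ ∞ (Function.uncurry u) ((Set.univ : Set ℝ) ×ˢ Set.Ioi (2*M)) ∧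
  ∀ t r : ℝ, 2*M < r →
    -(r/(r-2*M)) * pdtt u t r + ((r-2*M)/r) * pdrr u t r
      + (2*(r-M)/r^2) * pdr u t r - lam^2/r^2 * u t r = 0

/-- The rescaled solution near null infinity in the outgoing Eddington–Finkelstein
coordinates `τ̄ = t − r_*(r)`, `ρ̄ = 1/r`: `V(τ̄,ρ̄) = (1/ρ̄)·u(τ̄ + r_*(1/ρ̄), 1/ρ̄)`. -/
noncomputable def nullV (M : ℝ) (u : ℝ → ℝ → ℝ) (τ ρ : ℝ) : ℝ :=
  (1/ρ) * u (τ + rstar M (1/ρ)) (1/ρ)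


/-! ### Partial derivatives of functions on open subsets of the plane -/

/-- Partial derivative of `F : ℝ × ℝ → ℝ` in the first variable, as a function on the plane. -/
noncomputable def D1 (F : ℝ × ℝ → ℝ) (p : ℝ × ℝ) : ℝ := fderiv ℝ F p (1, 0)

/-- Partial derivative of `F : ℝ × ℝ → ℝ` in the second variable, as a function on the plane. -/
noncomputable def D2 (F : ℝ × ℝ → ℝ) (p : ℝ × ℝ) : ℝ := fderiv ℝ F p (0, 1)

/-- The open strip `ℝ × (0, R)`; with `R = 1/(2M)` this is the exterior region in the
coordinates `(τ̄, ρ̄)`. -/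
def strip (R : ℝ) : Set (ℝ × ℝ) := (Set.univ : Set ℝ) ×ˢ Set.Ioo 0 R

lemma isOpen_strip (R : ℝ) : IsOpen (strip R) := isOpen_univ.prod isOpen_Ioo

lemma mem_strip {R : ℝ} {p : ℝ × ℝ} : p ∈ strip R ↔ 0 < p.2 ∧ p.2 < R := by
  simp [strip]

lemma fderiv_eq_D (F : ℝ × ℝ → ℝ) (p : ℝ × ℝ) :
    fderiv ℝ F p = D1 F p • ContinuousLinearMap.fst ℝ ℝ ℝ
      + D2 F p • ContinuousLinearMap.snd ℝ ℝ ℝ := by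
  ext <;> simp [D1, D2]

section
variable {F G : ℝ × ℝ → ℝ} {s : Set (ℝ × ℝ)} {p : ℝ × ℝ}

lemma D1_smooth (hs : IsOpen s) (hF : ContDiffOn ℝ ∞ F s) : ContDiffOn ℝ ∞ (D1 F) s :=
  (hF.fderiv_of_isOpen (m := ∞) hs (by simp)).clm_apply contDiffOn_const

lemma D2_smooth (hs : IsOpen s) (hF : ContDiffOn ℝ ∞ F s) : ContDiffOn ℝ ∞ (D2 F) s :=
  (hF.fderiv_of_isOpen (m := ∞) hs (by simp)).clm_apply contDiffOn_const

lemma smooth_differentiableAt (hs : IsOpen s) (hF : ContDiffOn ℝ ∞ F s) (hp : p ∈ s) :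
    DifferentiableAt ℝ F p :=
  (hF.contDiffAt (hs.mem_nhds hp)).differentiableAt (by simp)

lemma D1_congr (hs : IsOpen s) (h : EqOn F G s) : EqOn (D1 F) (D1 G) s := fun p hp => by
  unfold D1; rw [(h.eventuallyEq_of_mem (hs.mem_nhds hp)).fderiv_eq]

lemma D2_congr (hs : IsOpen s) (h : EqOn F G s) : EqOn (D2 F) (D2 G) s := fun p hp => by
  unfold D2; rw [(h.eventuallyEq_of_mem (hs.mem_nhds hp)).fderiv_eq]

lemma D1_D2_comm (hs : IsOpen s) (hF : ContDiffOn ℝ ∞ F s) (hp : p ∈ s) :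
    D1 (D2 F) p = D2 (D1 F) p := by
  have hd : DifferentiableAt ℝ (fderiv ℝ F) p :=
    ((hF.fderiv_of_isOpen (m := ∞) hs (by simp)).contDiffAt
      (hs.mem_nhds hp)).differentiableAt (by simp)
  have hsymm := (hF.contDiffAt (hs.mem_nhds hp)).isSymmSndFDerivAt
    (by
      rw [minSmoothness_of_isRCLikeNormedField]
      exact WithTop.coe_le_coe.2 (le_top : (2 : ℕ∞) ≤ ⊤))
  have key : ∀ v w : ℝ × ℝ,
      fderiv ℝ (fun q => fderiv ℝ F q v) p w = fderiv ℝ (fderiv ℝ F) p w v := by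
    intro v w
    rw [fderiv_clm_apply hd (differentiableAt_const v)]
    simp
  change fderiv ℝ (fun q => fderiv ℝ F q (0, 1)) p (1, 0)
    = fderiv ℝ (fun q => fderiv ℝ F q (1, 0)) p (0, 1)
  rw [key, key]
  exact hsymm _ _

/-- Chain rule along a plane curve, in terms of the partial derivatives. -/
lemma hasDerivAt_curve {x y : ℝ → ℝ} {x' y' t : ℝ}
    (hF : DifferentiableAt ℝ F (x t, y t)) (hx : HasDerivAt x x' t) (hy : HasDerivAt y y' t) :
    HasDerivAt (fun s => F (x s, y s)) (x' * D1 F (x t, y t) + y' * D2 F (x t, y t)) t := by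
  have h := hF.hasFDerivAt.comp_hasDerivAt t (hx.prodMk hy)
  rw [fderiv_eq_D] at h
  simpa [mul_comm, Function.comp_def] using h

lemma hasDerivAt_fst (hF : DifferentiableAt ℝ F p) :
    HasDerivAt (fun t => F (t, p.2)) (D1 F p) p.1 := by
  simpa using hasDerivAt_curve (F := F) (x := fun t => t) (y := fun _ => p.2) (t := p.1)
    (by simpa using hF) (hasDerivAt_id _) (hasDerivAt_const _ _)

lemma hasDerivAt_snd (hF : DifferentiableAt ℝ F p) :
    HasDerivAt (fun r => F (p.1, r)) (D2 F p) p.2 := by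
  simpa using hasDerivAt_curve (F := F) (x := fun _ => p.1) (y := fun t => t) (t := p.2)
    (by simpa using hF) (hasDerivAt_const _ _) (hasDerivAt_id _)

end

/-! ### Smooth extension to the boundary of a strip -/

/-- Local bounds on both partial derivatives near a boundary point give a limit there. -/
lemma exists_limit_of_bounded {R C ε τ : ℝ} (hε : 0 < ε) (hεR : ε ≤ R) {F : ℝ × ℝ → ℝ}
    (hF : ContDiffOn ℝ ∞ F (strip R))
    (h1 : ∀ p : ℝ × ℝ, |p.1 - τ| < ε → 0 < p.2 → p.2 < ε → |D1 F p| ≤ C)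
    (h2 : ∀ p : ℝ × ℝ, |p.1 - τ| < ε → 0 < p.2 → p.2 < ε → |D2 F p| ≤ C) :
    ∃ y, Tendsto F (nhdsWithin (τ, 0) (strip R)) (nhds y) := by
  set s : Set (ℝ × ℝ) := Ioo (τ - ε) (τ + ε) ×ˢ Ioo 0 ε with hs
  have hmem : ∀ p ∈ s, |p.1 - τ| < ε ∧ 0 < p.2 ∧ p.2 < ε := by
    rintro p ⟨⟨ha, hb⟩, hc, hd⟩
    exact ⟨abs_lt.2 ⟨by linarith, by linarith⟩, hc, hd⟩
  have hC : 0 ≤ C := (abs_nonneg _).trans (h1 (τ, ε/2) (by simpa using hε) (by simpa using hε)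
    (by simpa using hε))
  have hlip : LipschitzOnWith (2*C).toNNReal F s := by
    refine Convex.lipschitzOnWith_of_nnnorm_fderiv_le (𝕜 := ℝ) (fun p hp => ?_) (fun p hp => ?_)
      ((convex_Ioo _ _).prod (convex_Ioo _ _))
    · obtain ⟨_, hb, hc⟩ := hmem p hp
      exact smooth_differentiableAt (isOpen_strip R) hF (mem_strip.2 ⟨hb, hc.trans_le hεR⟩)
    · obtain ⟨ha, hb, hc⟩ := hmem p hp
      rw [← NNReal.coe_le_coe, coe_nnnorm, Real.coe_toNNReal _ (by positivity)]
      refine ContinuousLinearMap.opNorm_le_bound _ (by positivity) fun v => ?_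
      rw [fderiv_eq_D]
      have e1 := h1 p ha hb hc
      have e2 := h2 p ha hb hc
      have n1 : |v.1| ≤ ‖v‖ := norm_fst_le v
      have n2 : |v.2| ≤ ‖v‖ := norm_snd_le v
      calc ‖(D1 F p • ContinuousLinearMap.fst ℝ ℝ ℝ
              + D2 F p • ContinuousLinearMap.snd ℝ ℝ ℝ) v‖
          = |D1 F p * v.1 + D2 F p * v.2| := by simp
        _ ≤ |D1 F p| * |v.1| + |D2 F p| * |v.2| := by
            rw [← abs_mul, ← abs_mul]; exact abs_add_le _ _
        _ ≤ C * ‖v‖ + C * ‖v‖ := by gcongr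
        _ = 2 * C * ‖v‖ := by ring
  obtain ⟨g, hg, hgF⟩ := hlip.extend_real
  refine ⟨g (τ, 0), ?_⟩
  have ht : Tendsto g (nhdsWithin (τ, 0) (strip R)) (nhds (g (τ, 0))) :=
    hg.continuous.continuousAt.tendsto.mono_left nhdsWithin_le_nhds
  refine ht.congr' ?_
  have hU : Ioo (τ - ε) (τ + ε) ×ˢ Ioo (-ε) ε ∈ nhds ((τ, 0) : ℝ × ℝ) :=
    (isOpen_Ioo.prod isOpen_Ioo).mem_nhds ⟨⟨by linarith, by linarith⟩, by simpa, by simpa⟩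
  filter_upwards [mem_nhdsWithin_of_mem_nhds hU, self_mem_nhdsWithin] with p hp hp'
  exact (hgF ⟨hp.1, (mem_strip.1 hp').1, hp.2.2⟩).symm

/-- A family of smooth functions on `ℝ × (0,R)`, stable under both partial derivatives, all of
whose members are bounded near every point of the line `ρ = 0`, consists of functions that
extend smoothly to `ℝ × [0,R)`. -/
lemma smooth_extension {R : ℝ} (hR : 0 < R) (S : Set (ℝ × ℝ → ℝ))
    (hsm : ∀ F ∈ S, ContDiffOn ℝ ∞ F (strip R))
    (hS1 : ∀ F ∈ S, ∃ G ∈ S, EqOn (D1 F) G (strip R))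
    (hS2 : ∀ F ∈ S, ∃ G ∈ S, EqOn (D2 F) G (strip R))
    (hb : ∀ F ∈ S, ∀ τ : ℝ, ∃ ε > 0, ∃ C, ∀ p : ℝ × ℝ,
      |p.1 - τ| < ε → 0 < p.2 → p.2 < ε → |F p| ≤ C) :
    ∀ F ∈ S, ContDiffOn ℝ ∞ (extendFrom (strip R) F) ((Set.univ : Set ℝ) ×ˢ Set.Ico 0 R) := by
  set B : Set (ℝ × ℝ) := (Set.univ : Set ℝ) ×ˢ Set.Ico 0 R with hB
  have hsub : strip R ⊆ B := prod_mono le_rfl Ioo_subset_Ico_self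
  have hcl : B ⊆ closure (strip R) := by
    rw [strip, closure_prod_eq, closure_Ioo hR.ne]
    exact prod_mono subset_closure Ico_subset_Icc_self
  have hlim : ∀ F ∈ S, ∀ x ∈ B, ∃ y, Tendsto F (nhdsWithin x (strip R)) (nhds y) := by
    rintro F hF ⟨τ, ρ⟩ hx
    rcases hx.2.1.eq_or_lt with h0 | h0
    · obtain ⟨G, hG, hFG⟩ := hS1 F hF
      obtain ⟨H, hH, hFH⟩ := hS2 F hF
      obtain ⟨ε, hε, C, hC⟩ := hb G hG τ
      obtain ⟨ε', hε', C', hC'⟩ := hb H hH τ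
      simp only at h0
      subst h0
      refine exists_limit_of_bounded (ε := min (min ε ε') R) (C := max C C')
        (by positivity) (min_le_right _ _) (hsm F hF) ?_ ?_
      · intro p h1 h2 h3
        simp only [lt_min_iff] at h1 h3
        rw [hFG (mem_strip.2 ⟨h2, h3.2⟩)]
        exact (hC p h1.1.1 h2 h3.1.1).trans (le_max_left _ _)
      · intro p h1 h2 h3
        simp only [lt_min_iff] at h1 h3
        rw [hFH (mem_strip.2 ⟨h2, h3.2⟩)]
        exact (hC' p h1.1.2 h2 h3.1.2).trans (le_max_right _ _)
    · exact ⟨F (τ, ρ), (hsm F hF).continuousOn _ (mem_strip.2 ⟨h0, hx.2.2⟩)⟩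
  have hcont : ∀ F ∈ S, ContinuousOn (extendFrom (strip R) F) B := fun F hF =>
    continuousOn_extendFrom hcl (hlim F hF)
  have heq : ∀ F ∈ S, EqOn (extendFrom (strip R) F) F (strip R) := fun F hF =>
    extendFrom_extends (hsm F hF).continuousOn
  have hderiv : ∀ F ∈ S, ∀ G ∈ S, ∀ H ∈ S, EqOn (D1 F) G (strip R) → EqOn (D2 F) H (strip R) →
      ∀ x ∈ B, HasFDerivWithinAt (extendFrom (strip R) F)
        (extendFrom (strip R) G x • ContinuousLinearMap.fst ℝ ℝ ℝ
          + extendFrom (strip R) H x • ContinuousLinearMap.snd ℝ ℝ ℝ) B x := by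
    intro F hF G hG H hH hFG hFH x hx
    have hfd : ∀ p ∈ strip R, fderiv ℝ (extendFrom (strip R) F) p
        = G p • ContinuousLinearMap.fst ℝ ℝ ℝ + H p • ContinuousLinearMap.snd ℝ ℝ ℝ := by
      intro p hp
      rw [((heq F hF).eventuallyEq_of_mem ((isOpen_strip R).mem_nhds hp)).fderiv_eq,
        fderiv_eq_D, hFG hp, hFH hp]
    have hdiff : DifferentiableOn ℝ (extendFrom (strip R) F) (strip R) :=
      ((hsm F hF).differentiableOn (by simp)).congr (heq F hF)
    -- a box shorter than the strip, so that its closure stays inside `B`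
    set b : ℝ := (x.2 + R) / 2 with hbdef
    have hb0 : 0 < b := by have := hx.2.1; simp only [hbdef]; linarith
    have hbR : b < R := by have := hx.2.2; simp only [hbdef]; linarith
    have hxb : x.2 < b := by have := hx.2.2; simp only [hbdef]; linarith
    have hss : strip b ⊆ strip R := prod_mono le_rfl (Ioo_subset_Ioo_right hbR.le)
    have hclb : closure (strip b) = (Set.univ : Set ℝ) ×ˢ Set.Icc 0 b := by
      rw [strip, closure_prod_eq, closure_Ioo hb0.ne, closure_univ]
    have hclB : closure (strip b) ⊆ B := by
      rw [hclb]; exact prod_mono le_rfl fun y hy => ⟨hy.1, hy.2.trans_lt hbR⟩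
    have key := hasFDerivWithinAt_closure_of_tendsto_fderiv (x := x)
      (f' := extendFrom (strip R) G x • ContinuousLinearMap.fst ℝ ℝ ℝ
          + extendFrom (strip R) H x • ContinuousLinearMap.snd ℝ ℝ ℝ)
      (hdiff.mono hss) (convex_univ.prod (convex_Ioo _ _)) (isOpen_strip b)
      (fun y hy => ((hcont F hF) y (hclB hy)).mono (hss.trans hsub)) ?_
    · refine key.mono_of_mem_nhdsWithin ?_
      rw [hclb, mem_nhdsWithin]
      refine ⟨{p | p.2 < b}, isOpen_lt continuous_snd continuous_const, hxb, ?_⟩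
      rintro p ⟨hp, hp'⟩
      exact ⟨trivial, hp'.2.1, le_of_lt hp⟩
    · have tG := (tendsto_extendFrom (hlim G hG x hx)).mono_left (nhdsWithin_mono x hss)
      have tH := (tendsto_extendFrom (hlim H hH x hx)).mono_left (nhdsWithin_mono x hss)
      refine ((tG.smul_const (ContinuousLinearMap.fst ℝ ℝ ℝ)).add
        (tH.smul_const (ContinuousLinearMap.snd ℝ ℝ ℝ))).congr' ?_
      filter_upwards [self_mem_nhdsWithin] with p hp
      exact (hfd p (hss hp)).symm
  have hUD : UniqueDiffOn ℝ B :=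
    uniqueDiffOn_univ.prod (uniqueDiffOn_Ico 0 R)
  have hn : ∀ n : ℕ, ∀ F ∈ S, ContDiffOn ℝ n (extendFrom (strip R) F) B := by
    intro n
    induction n with
    | zero => intro F hF; simpa using hcont F hF
    | succ n ih =>
      intro F hF
      obtain ⟨G, hG, hFG⟩ := hS1 F hF
      obtain ⟨H, hH, hFH⟩ := hS2 F hF
      push_cast
      rw [contDiffOn_succ_iff_hasFDerivWithinAt_of_uniqueDiffOn hUD]
      refine ⟨by simp, _, ?_, hderiv F hF G hG H hH hFG hFH⟩
      exact ((ih G hG).smul contDiffOn_const).add ((ih H hH).smul contDiffOn_const)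
  exact fun F hF => contDiffOn_infty.2 fun n => hn n F hF

/-! ### The tortoise coordinate as a function of `ρ = 1/r` -/

/-- The tortoise coordinate in terms of `ρ = 1/r`. -/
noncomputable def X (M ρ : ℝ) : ℝ := rstar M (1/ρ)

/-- The coefficient `ρ²(1-2Mρ)`; the ingoing null vector field is `2∂_τ + gc ∂_ρ`. -/
def gc (M ρ : ℝ) : ℝ := ρ^2 * (1 - 2*M*ρ)

lemma one_sub_pos {M ρ : ℝ} (hM : 0 < M) (h1 : ρ < 1/(2*M)) : 0 < 1 - 2*M*ρ := by
  have := (lt_div_iff₀ (by positivity : 0 < 2*M)).1 h1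
  linarith

lemma gc_pos {M ρ : ℝ} (hM : 0 < M) (h0 : 0 < ρ) (h1 : ρ < 1/(2*M)) : 0 < gc M ρ :=
  mul_pos (by positivity) (one_sub_pos hM h1)

lemma X_hasDerivAt {M ρ : ℝ} (hM : 0 < M) (h0 : 0 < ρ) (h1 : ρ < 1/(2*M)) :
    HasDerivAt (X M) (-1/gc M ρ) ρ := by
  have hf := one_sub_pos hM h1
  have hr : 1/ρ - 2*M ≠ 0 := by
    have : 1/ρ - 2*M = (1 - 2*M*ρ)/ρ := by field_simp
    rw [this]; positivity
  have h := (hasDerivAt_inv h0.ne')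
  have h2 := h.add (((h.sub_const (2*M)).log (by simpa using hr)).const_mul (2*M))
  have e : X M = fun y => y⁻¹ + 2*M*Real.log (y⁻¹ - 2*M) := by
    funext y; simp [X, rstar]
  rw [e]
  refine h2.congr_deriv ?_
  have : ρ⁻¹ - 2*M = (1 - 2*M*ρ)/ρ := by field_simp
  rw [this]
  unfold gc
  obtain ⟨f, hfe⟩ : ∃ f, f = 1 - 2*M*ρ := ⟨_, rfl⟩
  rw [← hfe] at hf ⊢
  field_simp
  rw [hfe]
  ring

lemma X_antitoneOn {M : ℝ} (hM : 0 < M) : AntitoneOn (X M) (Ioo 0 (1/(2*M))) := by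
  refine antitoneOn_of_deriv_nonpos (convex_Ioo _ _)
    (fun x hx => (X_hasDerivAt hM hx.1 hx.2).continuousAt.continuousWithinAt)
    (fun x hx => ?_) (fun x hx => ?_)
  · rw [interior_Ioo] at hx
    exact (X_hasDerivAt hM hx.1 hx.2).differentiableAt.differentiableWithinAt
  · rw [interior_Ioo] at hx
    rw [(X_hasDerivAt hM hx.1 hx.2).deriv]
    exact div_nonpos_of_nonpos_of_nonneg (by norm_num) (gc_pos hM hx.1 hx.2).le

lemma X_continuousOn {M : ℝ} (hM : 0 < M) : ContinuousOn (X M) (Ioo 0 (1/(2*M))) :=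
  fun _ hx => (X_hasDerivAt hM hx.1 hx.2).continuousAt.continuousWithinAt

/-- `r_* → ∞` as `ρ → 0⁺`. -/
lemma X_large {M : ℝ} (hM : 0 < M) (y : ℝ) :
    ∃ δ > 0, ∀ ρ, 0 < ρ → ρ < δ → y ≤ X M ρ := by
  refine ⟨min (1/(2*M+1)) (1/(|y|+1)), by positivity, fun ρ h0 h => ?_⟩
  rw [lt_min_iff] at h
  have a1 : 2*M+1 ≤ 1/ρ := by
    rw [le_div_iff₀ h0]; have := (lt_div_iff₀ (by positivity)).1 h.1; linarith
  have a2 : |y|+1 ≤ 1/ρ := by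
    rw [le_div_iff₀ h0]; have := (lt_div_iff₀ (by positivity)).1 h.2; linarith
  have hl : 0 ≤ Real.log (1/ρ - 2*M) := Real.log_nonneg (by linarith)
  have := le_abs_self y
  have : 0 ≤ 2*M*Real.log (1/ρ - 2*M) := by positivity
  unfold X rstar
  linarith

/-! ### Weighted bounds along ingoing characteristics -/

/-- Integration along the ingoing null line `τ + 2X(ρ) = c`, parametrized by `ρ`: the bound on
`2∂_τG + gc ∂_ρG` by a growing exponential in `τ` gains a factor `1/(2κ)`. -/
lemma transport_bound {M s₀ ρ c N κ : ℝ} (hM : 0 < M) (hs₀ : 0 < s₀) (hle : s₀ ≤ ρ)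
    (hρ : ρ < 1/(2*M)) (hN : 0 ≤ N) (hκ : 0 < κ) {G : ℝ × ℝ → ℝ}
    (hG : ∀ s ∈ Icc s₀ ρ, DifferentiableAt ℝ G (c - 2*X M s, s))
    (hbd : ∀ s ∈ Icc s₀ ρ, |2 * D1 G (c - 2*X M s, s) + gc M s * D2 G (c - 2*X M s, s)|
      ≤ N * Real.exp (κ * (c - 2*X M s)))
    (h0 : G (c - 2*X M s₀, s₀) = 0) :
    |G (c - 2*X M ρ, ρ)| ≤ N/(2*κ) * Real.exp (κ * (c - 2*X M ρ)) := by
  have hθ : ∀ s ∈ Icc s₀ ρ, HasDerivAt (fun s => c - 2*X M s) (2/gc M s) s := by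
    intro s hs
    refine (((X_hasDerivAt hM (hs₀.trans_le hs.1) (hs.2.trans_lt hρ)).const_mul 2).const_sub
      c).congr_deriv ?_
    ring
  have hd : ∀ s ∈ Icc s₀ ρ, HasDerivAt (fun s => G (c - 2*X M s, s))
      (2/gc M s * D1 G (c - 2*X M s, s) + 1 * D2 G (c - 2*X M s, s)) s := fun s hs =>
    hasDerivAt_curve (x := fun s => c - 2*X M s) (y := fun s => s) (hG s hs) (hθ s hs)
      (hasDerivAt_id s)
  have hB : ∀ s ∈ Icc s₀ ρ, HasDerivAt (fun s => N/(2*κ) * Real.exp (κ * (c - 2*X M s)))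
      (N/(2*κ) * (Real.exp (κ * (c - 2*X M s)) * (κ * (2/gc M s)))) s := fun s hs =>
    (((hθ s hs).const_mul κ).exp).const_mul _
  have := image_norm_le_of_norm_deriv_right_le_deriv_boundary'
    (f := fun s => G (c - 2*X M s, s)) (a := s₀) (b := ρ)
    (fun s hs => (hd s hs).continuousAt.continuousWithinAt)
    (fun s hs => (hd s (Ico_subset_Icc_self hs)).hasDerivWithinAt)
    (B := fun s => N/(2*κ) * Real.exp (κ * (c - 2*X M s)))
    (by rw [h0]; simp only [norm_zero]; positivity)
    (fun s hs => (hB s hs).continuousAt.continuousWithinAt)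
    (fun s hs => (hB s (Ico_subset_Icc_self hs)).hasDerivWithinAt)
    (fun s hs => by
      have hs' := Ico_subset_Icc_self hs
      have hg := gc_pos hM (hs₀.trans_le hs'.1) (hs'.2.trans_lt hρ)
      have h1 : 2/gc M s * D1 G (c - 2*X M s, s) + 1 * D2 G (c - 2*X M s, s)
        = (2 * D1 G (c - 2*X M s, s) + gc M s * D2 G (c - 2*X M s, s)) / gc M s := by
        field_simp
      have h2 : N/(2*κ) * (Real.exp (κ * (c - 2*X M s)) * (κ * (2/gc M s)))
        = N * Real.exp (κ * (c - 2*X M s)) / gc M s := by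
        field_simp
      rw [h1, h2, Real.norm_eq_abs, abs_div, abs_of_pos hg]
      gcongr
      exact hbd s hs')
    (right_mem_Icc.2 hle)
  simpa using this

/-- A non-timelike initial curve `τ = σ(ρ)`, `0 < ρ ≤ ρ₁`: moving outwards it goes back in
retarded time and forward in advanced time, and its advanced time is unbounded. -/
structure StartCurve (M ρ₁ : ℝ) (σ : ℝ → ℝ) : Prop where
  cont : ContinuousOn σ (Ioc 0 ρ₁)
  mono : MonotoneOn σ (Ioc 0 ρ₁)
  anti : AntitoneOn (fun ρ => σ ρ + 2 * X M ρ) (Ioc 0 ρ₁)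
  large : ∀ y, ∀ ρ ∈ Ioc 0 ρ₁, ∃ ρ' ∈ Ioc 0 ρ, y ≤ σ ρ' + 2 * X M ρ'

/-- The region `σ(ρ) ≤ τ ≤ b`, `0 < ρ ≤ ρ₁` to the future of an initial curve. -/
def future (ρ₁ b : ℝ) (σ : ℝ → ℝ) : Set (ℝ × ℝ) :=
  {p | p.2 ∈ Ioc 0 ρ₁ ∧ σ p.2 ≤ p.1 ∧ p.1 ≤ b}

/-- Grönwall estimate on the future of an initial curve on which `G` vanishes. The hypothesis
`hbd` may be non-local: the bound on `2∂_τG + gc ∂_ρG` is allowed to use a weighted bound of `G` on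
any set that is closed under increasing `ρ` within the region. Restricting to bounded advanced
time makes the set compact, so that the weighted supremum is finite and can be absorbed. -/
lemma gronwall {M ρ₁ b N B κ : ℝ} {σ : ℝ → ℝ} (hM : 0 < M) (hρ₁ : ρ₁ < 1/(2*M))
    (hσ : StartCurve M ρ₁ σ) (hN : 0 ≤ N) (hB : 0 ≤ B) (hκ : 0 < κ) (hBκ : B ≤ κ)
    {G : ℝ × ℝ → ℝ} (hG : ContDiffOn ℝ ∞ G (strip (1/(2*M))))
    (h0 : ∀ ρ ∈ Ioc 0 ρ₁, σ ρ ≤ b → G (σ ρ, ρ) = 0)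
    (hbd : ∀ D ⊆ future ρ₁ b σ,
      (∀ p ∈ D, ∀ ρ' ∈ Icc p.2 ρ₁, σ ρ' ≤ p.1 → (p.1, ρ') ∈ D) →
      ∀ K, 0 ≤ K → (∀ p ∈ D, |G p| ≤ K * Real.exp (κ * p.1)) →
      ∀ p ∈ D, |2 * D1 G p + gc M p.2 * D2 G p| ≤ (N + B * K) * Real.exp (κ * p.1)) :
    ∀ p ∈ future ρ₁ b σ, |G p| ≤ N/κ * Real.exp (κ * p.1) := by
  rintro p ⟨hp1, hp2, hp3⟩
  obtain ⟨m, ⟨hm0, hmp⟩, hm⟩ := hσ.large (p.1 + 2 * X M p.2) p.2 hp1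
  set v := σ m + 2 * X M m with hv
  have hmρ : m ≤ ρ₁ := hmp.trans hp1.2
  have hI : Icc m ρ₁ ⊆ Ioc 0 ρ₁ := fun s hs => ⟨hm0.trans_le hs.1, hs.2⟩
  have hI' : Icc m ρ₁ ⊆ Ioo 0 (1/(2*M)) := fun s hs => ⟨hm0.trans_le hs.1, hs.2.trans_lt hρ₁⟩
  have hXc : ContinuousOn (X M) (Icc m ρ₁) := (X_continuousOn hM).mono hI'
  have hσc : ContinuousOn σ (Icc m ρ₁) := hσ.cont.mono hI
  set D : Set (ℝ × ℝ) := {q | q.2 ∈ Icc m ρ₁ ∧ σ q.2 ≤ q.1 ∧ q.1 ≤ b ∧ q.1 + 2 * X M q.2 ≤ v}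
    with hD
  have hDf : D ⊆ future ρ₁ b σ := fun q hq => ⟨hI hq.1, hq.2.1, hq.2.2.1⟩
  have hDs : D ⊆ strip (1/(2*M)) := fun q hq => mem_strip.2 (hI' hq.1)
  have hpD : p ∈ D := ⟨⟨hmp, hp1.2⟩, hp2, hp3, hm⟩
  have hDcomp : IsCompact D := by
    set Q : Set (ℝ × ℝ) := Icc (σ m) b ×ˢ Icc m ρ₁ with hQ
    have hQc : IsCompact Q := isCompact_Icc.prod isCompact_Icc
    have e : D = (Q ∩ (fun q : ℝ × ℝ => q.1 - σ q.2) ⁻¹' Ici 0)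
        ∩ (Q ∩ (fun q : ℝ × ℝ => v - (q.1 + 2 * X M q.2)) ⁻¹' Ici 0) := by
      ext q
      constructor
      · rintro ⟨h1, h2, h3, h4⟩
        have hq : q ∈ Q :=
          ⟨⟨(hσ.mono ⟨hm0, hmρ⟩ (hI h1) h1.1).trans h2, h3⟩, h1⟩
        exact ⟨⟨hq, by simpa using h2⟩, hq, by simpa using h4⟩
      · rintro ⟨⟨hq, h2⟩, _, h4⟩
        exact ⟨hq.2, by simpa using h2, hq.1.2, by simpa using h4⟩
    have hm2 : MapsTo (fun q : ℝ × ℝ => q.2) Q (Icc m ρ₁) := fun q hq => hq.2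
    have c1 : ContinuousOn (fun q : ℝ × ℝ => q.1 - σ q.2) Q :=
      continuousOn_fst.sub (hσc.comp continuousOn_snd hm2)
    have c2 : ContinuousOn (fun q : ℝ × ℝ => v - (q.1 + 2 * X M q.2)) Q :=
      continuousOn_const.sub (continuousOn_fst.add
        (continuousOn_const.mul (hXc.comp continuousOn_snd hm2)))
    rw [e]
    exact hQc.of_isClosed_subset
      ((c1.preimage_isClosed_of_isClosed hQc.isClosed isClosed_Ici).inter
        (c2.preimage_isClosed_of_isClosed hQc.isClosed isClosed_Ici))
      (fun q hq => hq.1.1)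
  have hDup : ∀ q ∈ D, ∀ ρ' ∈ Icc q.2 ρ₁, σ ρ' ≤ q.1 → (q.1, ρ') ∈ D := by
    rintro q ⟨h1, h2, h3, h4⟩ ρ' hρ' hs
    have hin : ρ' ∈ Icc m ρ₁ := ⟨h1.1.trans hρ'.1, hρ'.2⟩
    refine ⟨hin, hs, h3, ?_⟩
    have := X_antitoneOn hM (hI' h1) (hI' hin) hρ'.1
    simp only
    linarith
  -- the weighted maximum
  obtain ⟨q, hqD, hq⟩ := hDcomp.exists_isMaxOn ⟨p, hpD⟩
    (f := fun q => |G q| * Real.exp (-(κ * q.1)))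
    ((hG.continuousOn.mono hDs).abs.mul (by fun_prop))
  set K := |G q| * Real.exp (-(κ * q.1)) with hK
  have hK0 : 0 ≤ K := by positivity
  have hGK : ∀ p ∈ D, |G p| ≤ K * Real.exp (κ * p.1) := by
    intro z hz
    have := hq hz
    simp only [mem_ofPred_eq] at this
    rw [Real.exp_neg, ← div_eq_mul_inv, div_le_iff₀ (Real.exp_pos _)] at this
    exact this
  have hL := hbd D hDf hDup K hK0 hGK
  -- follow the characteristic through `q` back to the initial curve
  obtain ⟨s₀, hs₀, hs₀v⟩ : ∃ s₀ ∈ Icc m q.2, σ s₀ + 2 * X M s₀ = q.1 + 2 * X M q.2 := by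
    have hsub : Icc m q.2 ⊆ Icc m ρ₁ := Icc_subset_Icc_right hqD.1.2
    have := intermediate_value_Icc' hqD.1.1
      (f := fun s => σ s + 2 * X M s)
      ((hσc.mono hsub).add (continuousOn_const.mul (hXc.mono hsub)))
    obtain ⟨s, hs, hs'⟩ := this ⟨by simpa using hqD.2.1, hqD.2.2.2⟩
    exact ⟨s, hs, hs'⟩
  set c := q.1 + 2 * X M q.2 with hc
  have hpath : ∀ s ∈ Icc s₀ q.2, (c - 2 * X M s, s) ∈ D := by
    intro s hs
    have hs0 : s₀ ∈ Icc m ρ₁ := ⟨hs₀.1, hs₀.2.trans hqD.1.2⟩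
    have hsI : s ∈ Icc m ρ₁ := ⟨hs₀.1.trans hs.1, hs.2.trans hqD.1.2⟩
    have a1 := hσ.anti (hI hs0) (hI hsI) hs.1
    have a2 := X_antitoneOn hM (hI' hsI) (hI' hqD.1) hs.2
    have a3 := hqD.2.2.2
    have a4 := hqD.2.2.1
    simp only at a1
    exact ⟨hsI, by simp only; linarith, by simp only; linarith, by simp only; linarith⟩
  have hT := transport_bound (c := c) (N := N + B*K) (κ := κ) hM (hm0.trans_le hs₀.1) hs₀.2
    (hqD.1.2.trans_lt hρ₁) (by positivity) hκ
    (fun s hs => smooth_differentiableAt (isOpen_strip _) hG (hDs (hpath s hs)))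
    (fun s hs => hL _ (hpath s hs))
    (by
      have e : c - 2 * X M s₀ = σ s₀ := by rw [← hs₀v]; ring
      rw [e]
      refine h0 s₀ ⟨hm0.trans_le hs₀.1, hs₀.2.trans hqD.1.2⟩ ?_
      rw [← e]
      exact (hpath s₀ ⟨le_rfl, hs₀.2⟩).2.2.1)
  have ec : c - 2 * X M q.2 = q.1 := by simp [hc]
  rw [ec] at hT
  have hKle : K ≤ (N + B*K)/(2*κ) := by
    have hGq : |G q| = K * Real.exp (κ * q.1) := by
      rw [hK, mul_assoc, ← Real.exp_add]; simp
    have hT' : |G q| ≤ (N + B*K)/(2*κ) * Real.exp (κ * q.1) := hT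
    rw [hGq] at hT'
    exact le_of_mul_le_mul_right hT' (Real.exp_pos _)
  have hKN : K ≤ N/κ := by
    rw [le_div_iff₀ (by positivity)] at hKle ⊢
    nlinarith [mul_le_mul_of_nonneg_right hBκ hK0]
  exact (hGK p hpD).trans (by gcongr)

/-! ### The rescaled wave equation and its `ρ`-derivatives -/

/-- `V` is smooth on the exterior and solves the wave equation for the rescaled field,
`2∂_τ∂_ρV + ∂_ρ(ρ²(1-2Mρ)∂_ρV) = (λ² + 2Mρ)V`, whose coefficients are regular at `ρ = 0`. -/
structure IsRescaledSolution (M lam : ℝ) (V : ℝ × ℝ → ℝ) : Prop where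
  smooth : ContDiffOn ℝ ∞ V (strip (1/(2*M)))
  eqn : ∀ p ∈ strip (1/(2*M)), 2 * D1 (D2 V) p + gc M p.2 * D2 (D2 V) p
    + (2*p.2 - 6*M*p.2^2) * D2 V p = (lam^2 + 2*M*p.2) * V p

lemma gc_hasDerivAt (M ρ : ℝ) : HasDerivAt (gc M) (2*ρ - 6*M*ρ^2) ρ := by
  unfold gc
  have h := ((hasDerivAt_id ρ).pow 2).mul (((hasDerivAt_id ρ).const_mul (2*M)).const_sub 1)
  refine h.congr_deriv ?_
  simp; ring

lemma iter_smooth {R : ℝ} {V : ℝ × ℝ → ℝ} (hV : ContDiffOn ℝ ∞ V (strip R)) (n : ℕ) :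
    ContDiffOn ℝ ∞ (D2^[n] V) (strip R) := by
  induction n with
  | zero => simpa using hV
  | succ n ih => rw [iterate_succ_apply']; exact D2_smooth (isOpen_strip R) ih

/-- Differentiating a transport equation for `F` in `ρ` yields one for `∂_ρF` whose
zeroth-order coefficients are again bounded. Here `H` and `J` stand for lower derivatives. -/
lemma transport_step {M lam k α β : ℝ} {F H J : ℝ × ℝ → ℝ}
    (hF : ContDiffOn ℝ ∞ F (strip (1/(2*M)))) (hH : ContDiffOn ℝ ∞ H (strip (1/(2*M))))
    (hJ : ContDiffOn ℝ ∞ J (strip (1/(2*M)))) (hHF : D2 H = F)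
    (hJH : ∀ p, β * D2 J p = β * H p)
    (heq : ∀ p ∈ strip (1/(2*M)), 2 * D1 F p + gc M p.2 * D2 F p
      + k * (2*p.2 - 6*M*p.2^2) * F p + (α * (2 - 12*M*p.2) - (lam^2 + 2*M*p.2)) * H p
      + β * J p = 0) :
    ∀ p ∈ strip (1/(2*M)), 2 * D1 (D2 F) p + gc M p.2 * D2 (D2 F) p
      + (k+1) * (2*p.2 - 6*M*p.2^2) * D2 F p
      + ((α+k) * (2 - 12*M*p.2) - (lam^2 + 2*M*p.2)) * F p
      + (β - 12*M*α - 2*M) * H p = 0 := by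
  intro p hp
  have ho := isOpen_strip (1/(2*M))
  have hd := fun {A : ℝ × ℝ → ℝ} (hA : ContDiffOn ℝ ∞ A (strip (1/(2*M)))) =>
    hasDerivAt_snd (smooth_differentiableAt ho hA hp)
  have g1 : HasDerivAt (fun s : ℝ => 2*s - 6*M*s^2) (2 - 12*M*p.2) p.2 := by
    refine (((hasDerivAt_id p.2).const_mul 2).sub
      (((hasDerivAt_id p.2).pow 2).const_mul (6*M))).congr_deriv ?_
    simp; ring
  have g2 : HasDerivAt (fun s : ℝ => α * (2 - 12*M*s) - (lam^2 + 2*M*s))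
      (-(12*M*α) - 2*M) p.2 := by
    refine (((((hasDerivAt_id p.2).const_mul (12*M)).const_sub 2).const_mul α).sub
      (((hasDerivAt_id p.2).const_mul (2*M)).const_add (lam^2))).congr_deriv ?_
    ring
  have h := (((((hd (D1_smooth ho hF)).const_mul 2).add
    ((gc_hasDerivAt M p.2).mul (hd (D2_smooth ho hF)))).add
    ((g1.const_mul k).mul (hd hF))).add (g2.mul (hd hH))).add ((hd hJ).const_mul β)
  have hz : HasDerivAt (fun _ : ℝ => (0:ℝ)) 0 p.2 := hasDerivAt_const _ _
  have hu := h.unique (hz.congr_of_eventuallyEq (by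
    have : ∀ᶠ s in nhds p.2, (p.1, s) ∈ strip (1/(2*M)) :=
      (Continuous.prodMk_right p.1).continuousAt.preimage_mem_nhds (ho.mem_nhds hp)
    filter_upwards [this] with s hs
    simpa using heq _ hs))
  have e := hJH p
  rw [hHF] at hu
  rw [D1_D2_comm ho hF hp]
  simp only [Prod.mk.eta] at hu
  linear_combination hu - e

/-- The transport equations satisfied by `∂_ρ^{n+2}V`. -/
lemma iter_eqn {M lam : ℝ} {V : ℝ × ℝ → ℝ} (hV : IsRescaledSolution M lam V) (n : ℕ) :
    ∃ α β : ℝ, ∀ p ∈ strip (1/(2*M)), 2 * D1 (D2^[n+2] V) p + gc M p.2 * D2 (D2^[n+2] V) p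
      + ((n:ℝ)+2) * (2*p.2 - 6*M*p.2^2) * D2^[n+2] V p
      + (α * (2 - 12*M*p.2) - (lam^2 + 2*M*p.2)) * D2^[n+1] V p + β * D2^[n] V p = 0 := by
  induction n with
  | zero =>
    refine ⟨0 + 1, 0 - 12*M*0 - 2*M, fun p hp => ?_⟩
    have := transport_step (lam := lam) (k := 1) (α := 0) (β := 0) (H := V) (J := V)
      (D2_smooth (isOpen_strip _) hV.smooth)
      hV.smooth hV.smooth rfl (fun _ => by simp)
      (fun p hp => by linear_combination hV.eqn p hp) p hp
    simp only [iterate_succ_apply', iterate_zero_apply, Nat.cast_zero, zero_add]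
    linear_combination this
  | succ n ih =>
    obtain ⟨α, β, h⟩ := ih
    refine ⟨α + ((n:ℝ)+2), β - 12*M*α - 2*M, fun p hp => ?_⟩
    have := transport_step (iter_smooth hV.smooth (n+2)) (iter_smooth hV.smooth (n+1))
      (iter_smooth hV.smooth n) (iterate_succ_apply' D2 (n+1) V).symm
      (fun _ => by rw [← iterate_succ_apply' D2 n V]) h p hp
    rw [← iterate_succ_apply' D2 (n+2) V] at this
    push_cast
    linear_combination this

/-! ### Uniform bounds up to null infinity -/

lemma coef_bound {M ρ : ℝ} (hM : 0 < M) (h0 : 0 < ρ) (h1 : ρ < 1/(2*M)) :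
    |2*ρ - 6*M*ρ^2| ≤ 2*(1/(2*M)) + 6*M*(1/(2*M))^2 := by
  have a1 : |2*ρ - 6*M*ρ^2| ≤ 2*ρ + 6*M*ρ^2 := by
    have : 0 ≤ 6*M*ρ^2 := by positivity
    rw [abs_le]; constructor <;> linarith
  exact a1.trans (by gcongr)

/-- The exponential rate for which the coupled estimate for `V` and `∂_ρV` closes. -/
noncomputable def rate (M lam : ℝ) : ℝ :=
  (2*(1/(2*M)) + 6*M*(1/(2*M))^2 + lam^2 + 1) * (1 + 1/(2*M))

lemma rate_pos {M lam : ℝ} (hM : 0 < M) : 0 < rate M lam := by unfold rate; positivity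

/-- Recover a bound on `V` from one on `∂_ρV` by integrating outwards at fixed `τ`. -/
lemma vertical_bound {M τ ρ ρ' C K : ℝ} (hM : 0 < M) (h0 : 0 < ρ) (hle : ρ ≤ ρ')
    (h1 : ρ' < 1/(2*M)) {V : ℝ × ℝ → ℝ} (hV : ContDiffOn ℝ ∞ V (strip (1/(2*M))))
    (hC : |V (τ, ρ')| ≤ C) (hK : ∀ s ∈ Icc ρ ρ', |D2 V (τ, s)| ≤ K) :
    |V (τ, ρ)| ≤ C + 1/(2*M) * K := by
  have hK0 : 0 ≤ K := (abs_nonneg _).trans (hK ρ (left_mem_Icc.2 hle))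
  have := Convex.norm_image_sub_le_of_norm_hasDerivWithin_le (f := fun s => V (τ, s))
    (f' := fun s => D2 V (τ, s)) (s := Icc ρ ρ') (C := K)
    (fun s hs => (hasDerivAt_snd (p := (τ, s)) (smooth_differentiableAt (isOpen_strip _) hV
      (mem_strip.2 ⟨h0.trans_le hs.1, hs.2.trans_lt h1⟩))).hasDerivWithinAt)
    hK (convex_Icc _ _) (right_mem_Icc.2 hle) (left_mem_Icc.2 hle)
  simp only [Real.norm_eq_abs] at this
  have h2 : |ρ - ρ'| ≤ 1/(2*M) := by rw [abs_le]; constructor <;> linarith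
  have h3 : K * |ρ - ρ'| ≤ 1/(2*M) * K := by
    rw [mul_comm]; gcongr
  have h4 : |V (τ, ρ)| ≤ |V (τ, ρ')| + |V (τ, ρ) - V (τ, ρ')| := by
    have := abs_add_le (V (τ, ρ')) (V (τ, ρ) - V (τ, ρ'))
    simpa using this
  linarith

/-- Coupled estimate for `V` and `∂_ρV` on the future of an initial curve: `∂_ρV` is transported
from the curve, where it vanishes, and `V` is recovered from a value controlled by `hexit` at a
larger `ρ`. The constants do not degenerate as `ρ → 0`. -/
lemma first_bound {M lam ρ₁ b C : ℝ} {σ : ℝ → ℝ} (hM : 0 < M) (hρ₁ : ρ₁ < 1/(2*M))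
    (hσ : StartCurve M ρ₁ σ) (hC : 0 ≤ C) {V : ℝ × ℝ → ℝ} (hV : IsRescaledSolution M lam V)
    (h0 : ∀ ρ ∈ Ioc 0 ρ₁, σ ρ ≤ b → D2 V (σ ρ, ρ) = 0)
    (hexit : ∀ p ∈ future ρ₁ b σ, ∃ ρ' ∈ Icc p.2 ρ₁, σ ρ' ≤ p.1 ∧
      |V (p.1, ρ')| ≤ C * Real.exp (rate M lam * p.1)) :
    ∀ p ∈ future ρ₁ b σ, |D2 V p| ≤ C * Real.exp (rate M lam * p.1) ∧
      |V p| ≤ (C + 1/(2*M) * C) * Real.exp (rate M lam * p.1) := by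
  set κ := rate M lam with hκ
  have hκ0 : 0 < κ := rate_pos hM
  set B := 2*(1/(2*M)) + 6*M*(1/(2*M))^2 + lam^2 + 1 with hBdef
  have hB0 : 0 < B := by positivity
  have hκB : κ = B * (1 + 1/(2*M)) := rfl
  have hVbd : ∀ D ⊆ future ρ₁ b σ,
      (∀ p ∈ D, ∀ ρ' ∈ Icc p.2 ρ₁, σ ρ' ≤ p.1 → (p.1, ρ') ∈ D) →
      ∀ K, (∀ p ∈ D, |D2 V p| ≤ K * Real.exp (κ * p.1)) →
      ∀ p ∈ D, |V p| ≤ (C + 1/(2*M) * K) * Real.exp (κ * p.1) := by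
    intro D hD hup K hK p hp
    obtain ⟨ρ', hρ', hs, hVρ'⟩ := hexit p (hD hp)
    have hpf := hD hp
    have hp0 : 0 < p.2 := hpf.1.1
    have := vertical_bound (τ := p.1) hM hp0 hρ'.1 (hρ'.2.trans_lt hρ₁) hV.smooth hVρ'
      (K := K * Real.exp (κ * p.1)) (fun s hs' => hK (p.1, s) (hup p hp s
        ⟨hs'.1, hs'.2.trans hρ'.2⟩ ((hσ.mono ⟨hp0.trans_le hs'.1, hs'.2.trans hρ'.2⟩
          ⟨hp0.trans_le hρ'.1, hρ'.2⟩ hs'.2).trans hs)))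
    refine this.trans (le_of_eq ?_)
    ring
  have h1 : ∀ p ∈ future ρ₁ b σ, |D2 V p| ≤ C * Real.exp (κ * p.1) := by
    intro p hp
    have := gronwall (B := κ) (κ := κ) (N := B * C) hM hρ₁ hσ (by positivity) hκ0.le hκ0 le_rfl
      (D2_smooth (isOpen_strip _) hV.smooth) h0 (fun D hD hup K hK0 hK p hp => by
        have hv := hVbd D hD hup K hK p hp
        have hd := hK p hp
        have hp0 : 0 < p.2 := (hD hp).1.1
        have hp1 : p.2 < 1/(2*M) := (hD hp).1.2.trans_lt hρ₁
        have e : 2 * D1 (D2 V) p + gc M p.2 * D2 (D2 V) p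
            = (lam^2 + 2*M*p.2) * V p - (2*p.2 - 6*M*p.2^2) * D2 V p := by
          linear_combination hV.eqn p (mem_strip.2 ⟨hp0, hp1⟩)
        have c1 : |2*p.2 - 6*M*p.2^2| ≤ B := by
          have := coef_bound hM hp0 hp1
          have := sq_nonneg lam
          linarith
        have c2 : |lam^2 + 2*M*p.2| ≤ B := by
          have h3 := one_sub_pos hM hp1
          have : 0 ≤ 2*(1/(2*M)) + 6*M*(1/(2*M))^2 := by positivity
          rw [abs_of_nonneg (by positivity)]
          linarith
        have hE := Real.exp_pos (κ * p.1)
        calc |2 * D1 (D2 V) p + gc M p.2 * D2 (D2 V) p|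
            ≤ |lam^2 + 2*M*p.2| * |V p| + |2*p.2 - 6*M*p.2^2| * |D2 V p| := by
              rw [e, ← abs_mul, ← abs_mul]; exact abs_sub _ _
          _ ≤ B * ((C + 1/(2*M) * K) * Real.exp (κ * p.1))
              + B * (K * Real.exp (κ * p.1)) := by gcongr
          _ = (B * C + κ * K) * Real.exp (κ * p.1) := by rw [hκB]; ring) p hp
    refine this.trans ?_
    gcongr
    rw [div_le_iff₀ hκ0, hκB]
    have : 0 ≤ B * C * (1/(2*M)) := by positivity
    linarith
  refine fun p hp => ⟨h1 p hp, hVbd _ subset_rfl (fun p hp ρ' hρ' hs => ?_) C h1 p hp⟩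
  exact ⟨⟨hp.1.1.trans_le hρ'.1, hρ'.2⟩, hs, hp.2.2⟩

lemma startCurve_const {M ρ₁ : ℝ} (hM : 0 < M) (hρ₁ : ρ₁ < 1/(2*M)) (a : ℝ) :
    StartCurve M ρ₁ (fun _ => a) where
  cont := continuousOn_const
  mono := monotoneOn_const
  anti := fun x hx y hy hxy => by
    have := X_antitoneOn hM ⟨hx.1, hx.2.trans_lt hρ₁⟩ ⟨hy.1, hy.2.trans_lt hρ₁⟩ hxy
    simp only; linarith
  large := fun y ρ hρ => by
    obtain ⟨δ, hδ, h⟩ := X_large hM ((y - a)/2)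
    have h0 : 0 < min ρ (δ/2) := lt_min hρ.1 (by positivity)
    have := h (min ρ (δ/2)) h0 ((min_le_right _ _).trans_lt (by linarith))
    exact ⟨min ρ (δ/2), ⟨h0, min_le_left _ _⟩, by linarith⟩

/-- The curve `t = 0`, that is `τ = -r_*`. -/
lemma startCurve_initial {M ρ₁ : ℝ} (hM : 0 < M) (hρ₁ : ρ₁ < 1/(2*M)) :
    StartCurve M ρ₁ (fun ρ => -X M ρ) where
  cont := ((X_continuousOn hM).mono fun x hx => ⟨hx.1, hx.2.trans_lt hρ₁⟩).neg
  mono := fun x hx y hy hxy => by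
    have := X_antitoneOn hM ⟨hx.1, hx.2.trans_lt hρ₁⟩ ⟨hy.1, hy.2.trans_lt hρ₁⟩ hxy
    simp only; linarith
  anti := fun x hx y hy hxy => by
    have := X_antitoneOn hM ⟨hx.1, hx.2.trans_lt hρ₁⟩ ⟨hy.1, hy.2.trans_lt hρ₁⟩ hxy
    simp only; linarith
  large := fun y ρ hρ => by
    obtain ⟨δ, hδ, h⟩ := X_large hM y
    have h0 : 0 < min ρ (δ/2) := lt_min hρ.1 (by positivity)
    have := h (min ρ (δ/2)) h0 ((min_le_right _ _).trans_lt (by linarith))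
    exact ⟨min ρ (δ/2), ⟨h0, min_le_left _ _⟩, by linarith⟩

/-- `V` vanishes near each point `(a, 0)` of null infinity with `a < τ₀`. -/
def VanishesBefore (τ₀ : ℝ) (V : ℝ × ℝ → ℝ) : Prop :=
  ∀ a < τ₀, ∃ δ > 0, ∀ p : ℝ × ℝ, |p.1 - a| < δ → 0 < p.2 → p.2 < δ → V p = 0

/-- Domain of dependence: data vanishing for `ρ ≤ ρ₁` on `t = 0` give a field that vanishes at
early retarded times near null infinity. -/
lemma vanishesBefore_of_data {M lam ρ₁ : ℝ} (hM : 0 < M) (hρ0 : 0 < ρ₁) (hρ₁ : ρ₁ < 1/(2*M))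
    {V : ℝ × ℝ → ℝ} (hV : IsRescaledSolution M lam V)
    (h0 : ∀ ρ ∈ Ioc 0 ρ₁, V (-X M ρ, ρ) = 0)
    (h1 : ∀ ρ ∈ Ioc 0 ρ₁, D2 V (-X M ρ, ρ) = 0) :
    VanishesBefore (-X M ρ₁) V := by
  have key := first_bound (C := 0) (b := -X M ρ₁) hM hρ₁ (startCurve_initial hM hρ₁) le_rfl hV
    (fun ρ hρ _ => h1 ρ hρ) (fun p hp => by
      obtain ⟨⟨a1, a2⟩, a3, a4⟩ := hp
      have hc : ContinuousOn (fun ρ => -X M ρ) (Icc p.2 ρ₁) :=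
        (startCurve_initial hM hρ₁).cont.mono fun s hs => ⟨a1.trans_le hs.1, hs.2⟩
      obtain ⟨s, hs, hs'⟩ := intermediate_value_Icc a2 hc ⟨a3, a4⟩
      simp only at hs'
      refine ⟨s, hs, hs'.le, ?_⟩
      rw [← hs', h0 s ⟨a1.trans_le hs.1, hs.2⟩]
      simp)
  intro a ha
  obtain ⟨δ, hδ, h⟩ := X_large hM (1 - a)
  refine ⟨min (min δ ρ₁) (min 1 (-X M ρ₁ - a)), ?_, fun p hp1 hp2 hp3 => ?_⟩
  · have : 0 < -X M ρ₁ - a := by linarith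
    positivity
  · simp only [lt_min_iff] at hp1 hp3
    have := h p.2 hp2 hp3.1.1
    have h4 := abs_lt.1 hp1.2.1
    have h5 := abs_lt.1 hp1.2.2
    have := (key p ⟨⟨hp2, hp3.1.2.le⟩, by simp only; linarith, by linarith⟩).2
    simpa using this

/-- All `ρ`-derivatives of a rescaled solution vanishing at early retarded times are bounded near
null infinity. -/
lemma iter_bounded {M lam τ₀ : ℝ} (hM : 0 < M) {V : ℝ × ℝ → ℝ}
    (hV : IsRescaledSolution M lam V) (hvan : VanishesBefore τ₀ V) (n : ℕ) (τ : ℝ) :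
    ∃ ε > 0, ∃ C, ∀ p : ℝ × ℝ, |p.1 - τ| < ε → 0 < p.2 → p.2 < ε → |D2^[n] V p| ≤ C := by
  set a := min τ₀ τ - 1 with ha
  set b := τ + 1 with hb
  have haτ : a ≤ τ - 1 := by have := min_le_right τ₀ τ; linarith
  have hab : a ≤ b := by linarith
  obtain ⟨δ, hδ, hz⟩ := hvan a (by have := min_le_left τ₀ τ; linarith)
  set ρ₁ := min (δ/2) (1/(4*M)) with hρdef
  have hρ0 : 0 < ρ₁ := by positivity
  have hρδ : ρ₁ < δ := (min_le_left _ _).trans_lt (by linarith)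
  have hρ₁ : ρ₁ < 1/(2*M) := by
    refine (min_le_right _ _).trans_lt ?_
    apply one_div_lt_one_div_of_lt <;> linarith
  have hσ := startCurve_const hM hρ₁ a
  -- every derivative vanishes on the initial line `τ = a`
  have hzero : ∀ k, ∀ ρ ∈ Ioc 0 ρ₁, D2^[k] V (a, ρ) = 0 := by
    have ho : IsOpen (Ioo (a-δ) (a+δ) ×ˢ Ioo 0 δ) := isOpen_Ioo.prod isOpen_Ioo
    have hk : ∀ k, EqOn (D2^[k] V) (fun _ => 0) (Ioo (a-δ) (a+δ) ×ˢ Ioo 0 δ) := by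
      intro k
      induction k with
      | zero =>
        exact fun p hp => hz p (abs_lt.2 ⟨by linarith [hp.1.1], by linarith [hp.1.2]⟩)
          hp.2.1 hp.2.2
      | succ k ih =>
        intro p hp
        rw [iterate_succ_apply', D2_congr ho ih hp]
        simp [D2]
    exact fun k ρ hρ => hk k ⟨⟨by simp only; linarith, by simp only; linarith⟩,
      hρ.1, hρ.2.trans_lt hρδ⟩
  have hexp : ∀ κ > 0, ∀ C ≥ 0, ∀ x ≥ a, C ≤ C * Real.exp (-(κ*a)) * Real.exp (κ*x) := by
    intro κ hκ C hC x hx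
    rw [mul_assoc, ← Real.exp_add]
    refine le_mul_of_one_le_right hC (Real.one_le_exp ?_)
    have := mul_le_mul_of_nonneg_left hx hκ.le
    linarith
  have hexp' : ∀ κ > 0, ∀ C ≥ 0, ∀ x ≤ b, C * Real.exp (κ*x) ≤ C * Real.exp (κ*b) := by
    intro κ hκ C hC x hx
    gcongr
  have hall : ∀ k, ∃ C, 0 ≤ C ∧ ∀ p ∈ future ρ₁ b (fun _ => a), |D2^[k] V p| ≤ C := by
    intro k
    induction k using Nat.strong_induction_on with
    | _ k ih =>
    match k, ih with
    | 0, _ | 1, _ =>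
      obtain ⟨C, hC⟩ := (isCompact_Icc (a := a) (b := b)).exists_bound_of_continuousOn
        (f := fun x => V (x, ρ₁)) (fun x _ => (hasDerivAt_fst (p := (x, ρ₁))
          (smooth_differentiableAt (isOpen_strip _) hV.smooth
            (mem_strip.2 ⟨hρ0, hρ₁⟩))).continuousAt.continuousWithinAt)
      have hC0 : 0 ≤ C := (norm_nonneg _).trans (hC a (left_mem_Icc.2 hab))
      have hr := rate_pos (lam := lam) hM
      have key := first_bound (C := C * Real.exp (-(rate M lam * a))) hM hρ₁ hσ (by positivity)
        hV (b := b) (fun ρ hρ _ => hzero 1 ρ hρ) (fun p hp => ⟨ρ₁, ⟨hp.1.2, le_rfl⟩, hp.2.1,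
          (hC p.1 hp.2).trans (hexp _ hr C hC0 _ hp.2.1)⟩)
      first
      | exact ⟨_, by positivity, fun p hp => ((key p hp).2).trans
          (hexp' _ hr _ (by positivity) _ hp.2.2)⟩
      | exact ⟨_, by positivity, fun p hp => ((key p hp).1).trans
          (hexp' _ hr _ (by positivity) _ hp.2.2)⟩
    | k+2, ih =>
      obtain ⟨C0, hC0, hb0⟩ := ih k (by omega)
      obtain ⟨C1, hC1, hb1⟩ := ih (k+1) (by omega)
      obtain ⟨α, β, heq⟩ := iter_eqn hV k
      set A := 2*(1/(2*M)) + 6*M*(1/(2*M))^2 with hA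
      set κ := ((k:ℝ)+2) * A with hκ
      have hκ0 : 0 < κ := by positivity
      set N := (|α| * 8 + lam^2 + 1) * C1 + |β| * C0 with hN
      have hN0 : 0 ≤ N := by positivity
      have key := gronwall (B := κ) (κ := κ) (N := N * Real.exp (-(κ*a))) (b := b) hM hρ₁ hσ
        (by positivity) hκ0.le hκ0 le_rfl (iter_smooth hV.smooth (k+2))
        (fun ρ hρ _ => hzero (k+2) ρ hρ) (fun D hD _ K hK0 hK p hp => by
          have hpf := hD hp
          have hp0 : 0 < p.2 := hpf.1.1
          have hp1 : p.2 < 1/(2*M) := hpf.1.2.trans_lt hρ₁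
          have h3 := one_sub_pos hM hp1
          have h4 : 0 < 2*M*p.2 := by positivity
          have c1 := coef_bound hM hp0 hp1
          have c2 : |α * (2 - 12*M*p.2) - (lam^2 + 2*M*p.2)| ≤ |α| * 8 + lam^2 + 1 := by
            have d1 : |2 - 12*M*p.2| ≤ 8 := by rw [abs_le]; constructor <;> linarith
            have d2 : |lam^2 + 2*M*p.2| ≤ lam^2 + 1 := by
              rw [abs_of_nonneg (by positivity)]; linarith
            calc _ ≤ |α| * |2 - 12*M*p.2| + |lam^2 + 2*M*p.2| := by
                  rw [← abs_mul]; exact abs_sub _ _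
              _ ≤ |α| * 8 + (lam^2 + 1) := by gcongr
              _ = _ := by ring
          have e : 2 * D1 (D2^[k+2] V) p + gc M p.2 * D2 (D2^[k+2] V) p
              = -(((k:ℝ)+2) * (2*p.2 - 6*M*p.2^2) * D2^[k+2] V p)
                - (α * (2 - 12*M*p.2) - (lam^2 + 2*M*p.2)) * D2^[k+1] V p
                - β * D2^[k] V p := by
            linear_combination heq p (mem_strip.2 ⟨hp0, hp1⟩)
          have hk2 : |(k:ℝ)+2| = (k:ℝ)+2 := abs_of_nonneg (by positivity)
          calc |2 * D1 (D2^[k+2] V) p + gc M p.2 * D2 (D2^[k+2] V) p|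
              ≤ ((k:ℝ)+2) * |2*p.2 - 6*M*p.2^2| * |D2^[k+2] V p|
                + |α * (2 - 12*M*p.2) - (lam^2 + 2*M*p.2)| * |D2^[k+1] V p|
                + |β| * |D2^[k] V p| := by
                rw [e]
                refine (abs_sub _ _).trans ?_
                rw [abs_mul β]
                gcongr
                refine (abs_sub _ _).trans ?_
                rw [abs_neg, abs_mul, abs_mul ((k:ℝ)+2), hk2, abs_mul (α * _ - _)]
            _ ≤ ((k:ℝ)+2) * A * (K * Real.exp (κ * p.1))
                + (|α| * 8 + lam^2 + 1) * C1 + |β| * C0 := by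
                gcongr
                · exact hK p hp
                · exact hb1 p hpf
                · exact hb0 p hpf
            _ = κ * K * Real.exp (κ * p.1) + N := by rw [hκ, hN]; ring
            _ ≤ κ * K * Real.exp (κ * p.1) + N * Real.exp (-(κ*a)) * Real.exp (κ * p.1) := by
                gcongr
                exact hexp κ hκ0 N hN0 _ hpf.2.1
            _ = _ := by ring)
      exact ⟨_, by positivity, fun p hp => (key p hp).trans
        (hexp' κ hκ0 _ (by positivity) _ hp.2.2)⟩
  obtain ⟨C, _, hC⟩ := hall n
  refine ⟨min 1 ρ₁, by positivity, C, fun p h1 h2 h3 => hC p ?_⟩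
  rw [lt_min_iff] at h1 h3
  have := abs_lt.1 h1.1
  exact ⟨⟨h2, h3.2.le⟩, by simp only; linarith, by linarith⟩

/-! ### Time derivatives of rescaled solutions -/

lemma rescaled_D1 {M lam : ℝ} {V : ℝ × ℝ → ℝ} (hV : IsRescaledSolution M lam V) :
    IsRescaledSolution M lam (D1 V) := by
  have ho := isOpen_strip (1/(2*M))
  have s1 := D1_smooth ho hV.smooth
  have s2 := D2_smooth ho hV.smooth
  have e : EqOn (D1 (D2 V)) (D2 (D1 V)) (strip (1/(2*M))) := fun p hp =>
    D1_D2_comm ho hV.smooth hp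
  refine ⟨s1, fun p hp => ?_⟩
  have hd := fun {A : ℝ × ℝ → ℝ} (hA : ContDiffOn ℝ ∞ A (strip (1/(2*M)))) =>
    hasDerivAt_fst (smooth_differentiableAt ho hA hp)
  have h := ((((hd (D1_smooth ho s2)).const_mul 2).add
    ((hd (D2_smooth ho s2)).const_mul (gc M p.2))).add
    ((hd s2).const_mul (2*p.2 - 6*M*p.2^2))).sub ((hd hV.smooth).const_mul (lam^2 + 2*M*p.2))
  have hz : HasDerivAt (fun _ : ℝ => (0:ℝ)) 0 p.1 := hasDerivAt_const _ _
  have hu := h.unique (hz.congr_of_eventuallyEq (by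
    have : ∀ᶠ s in nhds p.1, (s, p.2) ∈ strip (1/(2*M)) :=
      (Continuous.prodMk_left p.2).continuousAt.preimage_mem_nhds (ho.mem_nhds hp)
    filter_upwards [this] with s hs
    have := hV.eqn _ hs
    simp only [Pi.add_apply, Pi.sub_apply]
    linarith))
  rw [D1_congr ho e hp, D1_D2_comm ho s2 hp, D2_congr ho e hp, e hp] at hu
  linarith

lemma vanishes_D1 {τ₀ : ℝ} {V : ℝ × ℝ → ℝ} (hV : VanishesBefore τ₀ V) :
    VanishesBefore τ₀ (D1 V) := by
  intro a ha
  obtain ⟨δ, hδ, h⟩ := hV a ha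
  refine ⟨δ, hδ, fun p h1 h2 h3 => ?_⟩
  have ho : IsOpen (Ioo (a-δ) (a+δ) ×ˢ Ioo 0 δ) := isOpen_Ioo.prod isOpen_Ioo
  have hz : EqOn V (fun _ => 0) (Ioo (a-δ) (a+δ) ×ˢ Ioo 0 δ) := fun p hp =>
    h p (abs_lt.2 ⟨by linarith [hp.1.1], by linarith [hp.1.2]⟩) hp.2.1 hp.2.2
  have := abs_lt.1 h1
  rw [D1_congr ho hz ⟨⟨by linarith, by linarith⟩, h2, h3⟩]
  simp [D1]

lemma iter_D1_comm {R : ℝ} {V : ℝ × ℝ → ℝ} (hV : ContDiffOn ℝ ∞ V (strip R)) (n : ℕ) :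
    EqOn (D1 (D2^[n] V)) (D2^[n] (D1 V)) (strip R) := by
  induction n with
  | zero => exact fun _ _ => rfl
  | succ n ih =>
    intro p hp
    rw [iterate_succ_apply', iterate_succ_apply', ← D2_congr (isOpen_strip R) ih hp,
      D1_D2_comm (isOpen_strip R) (iter_smooth hV n) hp]

/-- A rescaled solution vanishing at early retarded times extends smoothly to null infinity. -/
lemma rescaled_extends {M lam τ₀ : ℝ} (hM : 0 < M) {V : ℝ × ℝ → ℝ}
    (hV : IsRescaledSolution M lam V) (hvan : VanishesBefore τ₀ V) :
    ContDiffOn ℝ ∞ (extendFrom (strip (1/(2*M))) V)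
      ((Set.univ : Set ℝ) ×ˢ Set.Ico 0 (1/(2*M))) := by
  refine smooth_extension (by positivity)
    {F | ∃ W n, IsRescaledSolution M lam W ∧ VanishesBefore τ₀ W ∧ F = D2^[n] W}
    ?_ ?_ ?_ ?_ V ⟨V, 0, hV, hvan, rfl⟩
  · rintro _ ⟨W, n, hW, _, rfl⟩
    exact iter_smooth hW.smooth n
  · rintro _ ⟨W, n, hW, hWv, rfl⟩
    exact ⟨_, ⟨D1 W, n, rescaled_D1 hW, vanishes_D1 hWv, rfl⟩, iter_D1_comm hW.smooth n⟩
  · rintro _ ⟨W, n, hW, hWv, rfl⟩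
    exact ⟨_, ⟨W, n+1, hW, hWv, rfl⟩, fun p _ => by rw [iterate_succ_apply']⟩
  · rintro _ ⟨W, n, hW, hWv, rfl⟩ τ
    exact iter_bounded hM hW hWv n τ

/-! ### From mode solutions to rescaled solutions -/

lemma X_contDiffOn {M : ℝ} : ContDiffOn ℝ ∞ (X M) (Ioo 0 (1/(2*M))) := by
  unfold X rstar
  have h : ContDiffOn ℝ ∞ (fun ρ : ℝ => 1/ρ) (Ioo 0 (1/(2*M))) :=
    contDiffOn_const.div contDiffOn_id fun x hx => hx.1.ne'
  refine h.add (contDiffOn_const.mul ((h.sub contDiffOn_const).log fun x hx => ?_))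
  have hM : 0 < M := by
    have := one_div_pos.1 (hx.1.trans hx.2); linarith
  have : 1/x - 2*M = (1 - 2*M*x)/x := by field_simp [hx.1.ne']
  rw [this]
  exact (div_pos (one_sub_pos hM hx.2) hx.1).ne'

lemma radius_gt {M ρ : ℝ} (hM : 0 < M) (h0 : 0 < ρ) (h1 : ρ < 1/(2*M)) : 2*M < 1/ρ := by
  rw [lt_div_iff₀ h0]; have := one_sub_pos hM h1; linarith

section
variable {M lam : ℝ} {u : ℝ → ℝ → ℝ}

/-- The exterior `ℝ × (2M,∞)` in the coordinates `(t,r)`. -/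
def exterior (M : ℝ) : Set (ℝ × ℝ) := (Set.univ : Set ℝ) ×ˢ Set.Ioi (2*M)

lemma isOpen_exterior : IsOpen (exterior M) := isOpen_univ.prod isOpen_Ioi

lemma pdt_eq {v : ℝ → ℝ → ℝ} (hv : ContDiffOn ℝ ∞ (uncurry v) (exterior M)) {t r : ℝ}
    (hr : 2*M < r) : deriv (fun s => v s r) t = D1 (uncurry v) (t, r) :=
  (hasDerivAt_fst (p := (t, r)) (smooth_differentiableAt isOpen_exterior hv ⟨trivial, hr⟩)).deriv

lemma pdr_eq {v : ℝ → ℝ → ℝ} (hv : ContDiffOn ℝ ∞ (uncurry v) (exterior M)) {t r : ℝ}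
    (hr : 2*M < r) : deriv (fun s => v t s) r = D2 (uncurry v) (t, r) :=
  (hasDerivAt_snd (p := (t, r)) (smooth_differentiableAt isOpen_exterior hv ⟨trivial, hr⟩)).deriv

/-- The mode equation in terms of `D1` and `D2`. -/
lemma mode_eqn (hu : IsModeSolution M lam u) {t r : ℝ} (hr : 2*M < r) :
    -(r/(r-2*M)) * D1 (D1 (uncurry u)) (t, r) + ((r-2*M)/r) * D2 (D2 (uncurry u)) (t, r)
      + (2*(r-M)/r^2) * D2 (uncurry u) (t, r) - lam^2/r^2 * uncurry u (t, r) = 0 := by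
  have hs := hu.1
  have e1 : pdtt u t r = D1 (D1 (uncurry u)) (t, r) := by
    have h : (fun s => pdt u s r) = fun s => D1 (uncurry u) (s, r) := by
      funext s; exact pdt_eq hs hr
    rw [pdtt, h]
    exact pdt_eq (v := fun t r => D1 (uncurry u) (t, r)) (D1_smooth isOpen_exterior hs) hr
  have e2 : pdrr u t r = D2 (D2 (uncurry u)) (t, r) := by
    have h : (fun s => pdr u t s) =ᶠ[nhds r] fun s => D2 (uncurry u) (t, s) := by
      filter_upwards [Ioi_mem_nhds hr] with s hs'
      exact pdr_eq hs hs'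
    rw [pdrr, h.deriv_eq]
    exact pdr_eq (v := fun t r => D2 (uncurry u) (t, r)) (D2_smooth isOpen_exterior hs) hr
  have e3 : pdr u t r = D2 (uncurry u) (t, r) := pdr_eq hs hr
  have := hu.2 t r hr
  rw [e1, e2, e3] at this
  exact this

/-- The change of coordinates `(τ,ρ) ↦ (t,r)`. -/
noncomputable def toTR (M : ℝ) (p : ℝ × ℝ) : ℝ × ℝ := (p.1 + X M p.2, 1/p.2)

lemma toTR_mem (hM : 0 < M) {p : ℝ × ℝ} (hp : p ∈ strip (1/(2*M))) : toTR M p ∈ exterior M :=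
  ⟨trivial, radius_gt hM (mem_strip.1 hp).1 (mem_strip.1 hp).2⟩

lemma comp_fst (hM : 0 < M) {A : ℝ × ℝ → ℝ} (hA : ContDiffOn ℝ ∞ A (exterior M)) {p : ℝ × ℝ}
    (hp : p ∈ strip (1/(2*M))) :
    HasDerivAt (fun s => A (toTR M (s, p.2))) (D1 A (toTR M p)) p.1 := by
  have := hasDerivAt_curve (F := A) (x := fun s => s + X M p.2) (y := fun _ => 1/p.2) (t := p.1)
    (smooth_differentiableAt isOpen_exterior hA (toTR_mem hM hp))
    ((hasDerivAt_id _).add_const _) (hasDerivAt_const _ _)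
  simpa [toTR] using this

lemma comp_snd (hM : 0 < M) {A : ℝ × ℝ → ℝ} (hA : ContDiffOn ℝ ∞ A (exterior M)) {p : ℝ × ℝ}
    (hp : p ∈ strip (1/(2*M))) :
    HasDerivAt (fun s => A (toTR M (p.1, s)))
      (-1/gc M p.2 * D1 A (toTR M p) + -1/p.2^2 * D2 A (toTR M p)) p.2 := by
  obtain ⟨h0, h1⟩ := mem_strip.1 hp
  have hi : HasDerivAt (fun s : ℝ => 1/s) (-1/p.2^2) p.2 := by
    simpa [neg_div] using hasDerivAt_inv h0.ne'
  exact hasDerivAt_curve (F := A) (x := fun s => p.1 + X M s) (y := fun s => 1/s) (t := p.2)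
    (smooth_differentiableAt isOpen_exterior hA (toTR_mem hM hp))
    ((X_hasDerivAt hM h0 h1).const_add _) hi

lemma nullV_smooth (hM : 0 < M) (hu : IsModeSolution M lam u) :
    ContDiffOn ℝ ∞ (uncurry (nullV M u)) (strip (1/(2*M))) := by
  have hρ : ContDiffOn ℝ ∞ (fun p : ℝ × ℝ => 1/p.2) (strip (1/(2*M))) :=
    contDiffOn_const.div contDiffOn_snd fun x hx => (mem_strip.1 hx).1.ne'
  have hT : ContDiffOn ℝ ∞ (toTR M) (strip (1/(2*M))) :=
    (contDiffOn_fst.add (X_contDiffOn.comp contDiffOn_snd fun p hp => hp.2)).prodMk hρ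
  exact hρ.mul (hu.1.comp hT fun p hp => toTR_mem hM hp)

/-- `∂_ρ` of the rescaled field in terms of the derivatives in `(t,r)`. -/
lemma D2_nullV (hM : 0 < M) (hu : IsModeSolution M lam u) {p : ℝ × ℝ}
    (hp : p ∈ strip (1/(2*M))) :
    D2 (uncurry (nullV M u)) p = -1/p.2^2 * uncurry u (toTR M p)
      + 1/p.2 * (-1/gc M p.2 * D1 (uncurry u) (toTR M p)
        + -1/p.2^2 * D2 (uncurry u) (toTR M p)) := by
  have h0 := (mem_strip.1 hp).1
  have hi : HasDerivAt (fun s : ℝ => 1/s) (-1/p.2^2) p.2 := by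
    simpa [neg_div] using hasDerivAt_inv h0.ne'
  exact (hasDerivAt_snd (smooth_differentiableAt (isOpen_strip _) (nullV_smooth hM hu) hp)).unique
    (hi.mul (comp_snd hM hu.1 hp))

/-- The rescaled field of a mode solution solves the rescaled equation. -/
lemma nullV_rescaled (hM : 0 < M) (hu : IsModeSolution M lam u) :
    IsRescaledSolution M lam (uncurry (nullV M u)) := by
  have ho := isOpen_strip (1/(2*M))
  have hs := nullV_smooth hM hu
  have hs2 := D2_smooth ho hs
  refine ⟨hs, fun p hp => ?_⟩
  obtain ⟨h0, h1⟩ := mem_strip.1 hp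
  have hf := one_sub_pos hM h1
  have hg := gc_pos hM h0 h1
  have hU := hu.1
  have hU1 := D1_smooth isOpen_exterior hU
  have hU2 := D2_smooth isOpen_exterior hU
  have ev1 : ∀ᶠ s in nhds p.1, (s, p.2) ∈ strip (1/(2*M)) :=
    (Continuous.prodMk_left p.2).continuousAt.preimage_mem_nhds (ho.mem_nhds hp)
  have ev2 : ∀ᶠ s in nhds p.2, (p.1, s) ∈ strip (1/(2*M)) :=
    (Continuous.prodMk_right p.1).continuousAt.preimage_mem_nhds (ho.mem_nhds hp)
  have i1 : HasDerivAt (fun s : ℝ => 1/s) (-1/p.2^2) p.2 := by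
    simpa [neg_div] using hasDerivAt_inv h0.ne'
  have i2 : HasDerivAt (fun s : ℝ => -1/s^2) (2/p.2^3) p.2 := by
    have := (hasDerivAt_const p.2 (-1:ℝ)).div ((hasDerivAt_id p.2).pow 2)
      (by simpa using h0.ne')
    refine this.congr_deriv ?_
    simp; field_simp
  have i3 : HasDerivAt (fun s : ℝ => -1/gc M s) ((2*p.2 - 6*M*p.2^2)/gc M p.2^2) p.2 := by
    refine ((hasDerivAt_const p.2 (-1:ℝ)).div (gc_hasDerivAt M p.2) hg.ne').congr_deriv ?_
    ring
  have d1 := (hasDerivAt_fst (smooth_differentiableAt ho hs2 hp)).unique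
    (((((comp_fst hM hU hp).const_mul (-1/p.2^2)).add
      ((((comp_fst hM hU1 hp).const_mul (-1/gc M p.2)).add
        ((comp_fst hM hU2 hp).const_mul (-1/p.2^2))).const_mul (1/p.2)))).congr_of_eventuallyEq
    (by
      filter_upwards [ev1] with s hs'
      exact D2_nullV hM hu hs'))
  have d2 := (hasDerivAt_snd (smooth_differentiableAt ho hs2 hp)).unique
    (((i2.mul (comp_snd hM hU hp)).add
      (i1.mul ((i3.mul (comp_snd hM hU1 hp)).add
        (i2.mul (comp_snd hM hU2 hp))))).congr_of_eventuallyEq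
    (by
      filter_upwards [ev2] with s hs'
      exact D2_nullV hM hu hs'))
  have hpde := mode_eqn hu (t := (toTR M p).1) (radius_gt hM h0 h1)
  have et : ((toTR M p).1, 1/p.2) = toTR M p := rfl
  rw [et] at hpde
  rw [d1, d2, D2_nullV hM hu hp]
  have hV : uncurry (nullV M u) p = 1/p.2 * uncurry u (toTR M p) := rfl
  rw [hV]
  simp only [Pi.add_apply, Pi.mul_apply, Prod.mk.eta]
  rw [← D1_D2_comm isOpen_exterior hU (toTR_mem hM hp)]
  generalize uncurry u (toTR M p) = a at *
  generalize D1 (uncurry u) (toTR M p) = a1 at *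
  generalize D2 (uncurry u) (toTR M p) = a2 at *
  generalize D1 (D1 (uncurry u)) (toTR M p) = a11 at *
  generalize D1 (D2 (uncurry u)) (toTR M p) = a12 at *
  generalize D2 (D2 (uncurry u)) (toTR M p) = a22 at *
  generalize p.2 = ρ at *
  obtain ⟨f, hfe⟩ : ∃ f, f = 1 - 2*M*ρ := ⟨_, rfl⟩
  have e1 : (1/ρ)/(1/ρ-2*M) = 1/f := by
    have : 1/ρ - 2*M = f/ρ := by rw [hfe]; field_simp
    rw [← hfe] at hf
    rw [this]; field_simp
  have e2 : (1/ρ-2*M)/(1/ρ) = f := by rw [hfe]; field_simp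
  have e3 : 2*(1/ρ-M)/(1/ρ)^2 = 2*ρ*(1 - M*ρ) := by field_simp
  have e4 : lam^2/(1/ρ)^2 = lam^2*ρ^2 := by field_simp
  rw [e1, e2, e3, e4] at hpde
  have hgf : gc M ρ = ρ^2 * f := by rw [hfe]; rfl
  rw [hgf]
  rw [← hfe] at hf
  -- eliminating `M` leaves `f` as a free nonzero variable; the claim is then `ρ⁻³` times `hpde`
  have hM' : M = (1 - f)/(2*ρ) := by field_simp; linarith [hfe]
  have hρ := h0.ne'
  have hf0 := hf.ne'
  clear hfe e1 e2 e3 e4 hgf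
  subst hM'
  rw [← sub_eq_zero]
  have key := congrArg (fun z => z/ρ^3) hpde
  simp only [zero_div] at key
  rw [← key]
  field_simp
  ring

end

/-! ### Smoothness at null infinity -/

/-- Proposition 3.5 (single mode): for smooth data vanishing for `r ≥ R₀`, the rescaled
solution extends smoothly to null infinity `{ρ̄ = 0}`. -/
theorem smooth_at_null_infinity
    (M lam R₀ : ℝ) (hM : 0 < M) (hlam : 0 ≤ lam) (hR₀ : 2*M < R₀)
    (u : ℝ → ℝ → ℝ) (hu : IsModeSolution M lam u)
    (hφ : ∀ r : ℝ, R₀ ≤ r → u 0 r = 0)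
    (hψ : ∀ r : ℝ, R₀ ≤ r → pdt u 0 r = 0) :
    ∃ V' : ℝ → ℝ → ℝ,
      ContDiffOn ℝ ∞ (Function.uncurry V') ((Set.univ : Set ℝ) ×ˢ Set.Ico 0 (1/(2*M))) ∧
      ∀ τ ρ : ℝ, ρ ∈ Set.Ioo 0 (1/(2*M)) → V' τ ρ = nullV M u τ ρ := by
  have hV := nullV_rescaled hM hu
  have hR : 0 < R₀ + 1 := by linarith
  have hρ₁ : 0 < 1/(R₀+1) := by positivity
  have hρ₁' : 1/(R₀+1) < 1/(2*M) := one_div_lt_one_div_of_lt (by positivity) (by linarith)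
  have hr : ∀ ρ ∈ Ioc 0 (1/(R₀+1)), R₀ < 1/ρ := by
    intro ρ hρ
    have := (le_one_div hρ.1 hR).1 hρ.2
    linarith
  -- `{t = 0}` is the curve `τ = -X M ρ`
  have hT : ∀ ρ, toTR M (-X M ρ, ρ) = (0, 1/ρ) := fun ρ => by simp [toTR]
  have h0 : ∀ ρ ∈ Ioc 0 (1/(R₀+1)), uncurry (nullV M u) (-X M ρ, ρ) = 0 := by
    intro ρ hρ
    have : uncurry (nullV M u) (-X M ρ, ρ) = 1/ρ * uncurry u (toTR M (-X M ρ, ρ)) := rfl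
    rw [this, hT, uncurry_apply_pair, hφ _ (hr ρ hρ).le, mul_zero]
  have h1 : ∀ ρ ∈ Ioc 0 (1/(R₀+1)), D2 (uncurry (nullV M u)) (-X M ρ, ρ) = 0 := by
    intro ρ hρ
    have hrρ := hr ρ hρ
    have hr2 : 2*M < 1/ρ := hR₀.trans hrρ
    have e0 : uncurry u (0, 1/ρ) = 0 := hφ _ hrρ.le
    have e1 : D1 (uncurry u) (0, 1/ρ) = 0 := by
      rw [← pdt_eq hu.1 hr2]; exact hψ _ hrρ.le
    have e2 : D2 (uncurry u) (0, 1/ρ) = 0 := by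
      have h : (fun s => u 0 s) =ᶠ[nhds (1/ρ)] fun _ => 0 := by
        filter_upwards [Ioi_mem_nhds hrρ] with s hs
        exact hφ s (le_of_lt hs)
      rw [← pdr_eq hu.1 hr2, h.deriv_eq, deriv_const]
    rw [D2_nullV hM hu (mem_strip.2 ⟨hρ.1, hρ.2.trans_lt hρ₁'⟩), hT, e0, e1, e2]
    simp
  have hvan := vanishesBefore_of_data hM hρ₁ hρ₁' hV h0 h1
  refine ⟨fun τ ρ => extendFrom (strip (1/(2*M))) (uncurry (nullV M u)) (τ, ρ),
    rescaled_extends hM hV hvan, fun τ ρ hρ => ?_⟩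
  have hp : (τ, ρ) ∈ strip (1/(2*M)) := mem_strip.2 hρ
  exact extendFrom_eq (subset_closure hp) (hV.smooth.continuousOn _ hp)
end

section
/- Let u be a λ-mode solution whose initial data (φ,ψ) are smooth and compactly supported in (2M,∞). Then u is jointly smooth in Kruskal coordinates up to both event horizons: there exists w : ℝ² → ℝ that is infinitely differentiable on [0,∞) × [0,∞) (in the sense of ContDiffOn, with all within-derivatives extending continuously up to the boundary) and satisfies w(e^{(t+r_*(r))/(4M)}, e^{−(t−r_*(r))/(4M)}) = u(t,r) for all t ∈ ℝ and all r > 2M. (Lemma 5.3, for a single spherical-harmonic mode.) -/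
/-!
In Kruskal coordinates the function `v = r u` satisfies the characteristic equation
`∂_μ ∂_ν v = V(μ ν) v` on the open quadrant, with
`V = (8M³/r⁴ + 4M²λ²/r³) e^{-r/(2M)}` (`kruskal_algebra`, `hasDerivAt_kruSnd_fst`). The radius `r`
is a smooth function of `μ ν` near `0` (`exists_radius`), hence `V` is smooth across the horizons
and the only question is whether `v` itself extends smoothly to the edges `μ = 0` and `ν = 0`.

The initial slice `t = 0` is the diagonal `μ = ν`. Since the data vanish for `r` close to `2M`,
they vanish on the diagonal near the corner, and uniqueness for the characteristic equation
(`goursat_unique`) gives `v = 0` on a small square `(0, s₀]²` (`exists_vanishing_square`).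

Near the edge `ν = 0`, away from the corner, `v` is determined by its values on the characteristics
`μ = s₀`, where it vanishes for small `ν`, and `ν = δ`, where it is smooth. The Goursat problem with
these data has a solution that is smooth across `ν = 0`: for small `δ` the integral equation is a
contraction on a strip `|ν| ≤ δ` (`exists_goursat_solution`), and smoothness of the fixed point
follows because the integral operator gains a derivative (`contDiff_succ_goursat`). By uniqueness
`v` agrees with this solution for `ν > 0` (`exists_smooth_extension`). Exchanging `μ` and `ν` treats
the other edge, so the continuous extension of `v` to the closed quadrant is smooth
(`contDiffOn_extendFrom_quadrant`). Dividing it by the radius, which is positive there, gives `w`.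
-/

open MeasureTheory Filter Set Function
open scoped ContDiff

/-! ### Smoothness of parametric and double integrals -/

/-- A function of two real variables is of class `C^(k+1)` once its two partial derivatives exist
everywhere and are jointly of class `C^k`. -/
lemma contDiff_succ_of_partials {F F₁ F₂ : ℝ → ℝ → ℝ} {k : ℕ}
    (h₁ : ∀ x y, HasDerivAt (fun s => F s y) (F₁ x y) x)
    (h₂ : ∀ x y, HasDerivAt (fun s => F x s) (F₂ x y) y)
    (c₁ : ContDiff ℝ k (uncurry F₁)) (c₂ : ContDiff ℝ k (uncurry F₂)) :
    ContDiff ℝ (k + 1) (uncurry F) := by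
  rw [contDiff_succ_iff_hasFDerivAt]
  refine ⟨fun p => uncurry F₁ p • ContinuousLinearMap.fst ℝ ℝ ℝ
    + uncurry F₂ p • ContinuousLinearMap.snd ℝ ℝ ℝ, by fun_prop, fun p => ?_⟩
  have := (hasStrictFDerivAt_uncurry_coprod (𝕜 := ℝ) (u := p) (f := F)
    (f₁ := fun x y => ContinuousLinearMap.toSpanSingleton ℝ (F₁ x y))
    (f₂ := fun x y => ContinuousLinearMap.toSpanSingleton ℝ (F₂ x y))
    (Eventually.of_forall fun v => (h₁ v.1 v.2).hasFDerivAt)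
    (Eventually.of_forall fun v => (h₂ v.1 v.2).hasFDerivAt) ?_ ?_).hasFDerivAt
  · have e : uncurry F₁ p • ContinuousLinearMap.fst ℝ ℝ ℝ + uncurry F₂ p •
        ContinuousLinearMap.snd ℝ ℝ ℝ = (ContinuousLinearMap.toSpanSingleton ℝ (F₁ p.1 p.2)).coprod
        (ContinuousLinearMap.toSpanSingleton ℝ (F₂ p.1 p.2)) := by
      ext <;> simp [uncurry]
    simp only [e]
    exact this
  · have := (ContinuousLinearMap.toSpanSingletonCLE (𝕜 := ℝ) (E := ℝ)).continuous.comp c₁.continuous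
    exact this.continuousAt
  · have := (ContinuousLinearMap.toSpanSingletonCLE (𝕜 := ℝ) (E := ℝ)).continuous.comp c₂.continuous
    exact this.continuousAt

lemma hasDerivAt_integral_param {f f₁ : ℝ → ℝ → ℝ} (hf : Continuous (uncurry f))
    (hf₁ : Continuous (uncurry f₁)) (h : ∀ x b, HasDerivAt (fun s => f s b) (f₁ x b) x)
    (c d x : ℝ) :
    HasDerivAt (fun x => ∫ b in c..d, f x b) (∫ b in c..d, f₁ x b) x := by
  obtain ⟨C, hC⟩ := ((isCompact_closedBall x 1).prod (isCompact_uIcc (a := c) (b := d))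
    ).exists_bound_of_continuousOn hf₁.continuousOn
  have hc : ∀ x, Continuous (f x) := fun x => hf.comp (by fun_prop : Continuous fun b => (x, b))
  have hc₁ : ∀ x, Continuous (f₁ x) := fun x => hf₁.comp (by fun_prop : Continuous fun b => (x, b))
  refine (intervalIntegral.hasDerivAt_integral_of_dominated_loc_of_deriv_le
    (bound := fun _ => C) (Metric.closedBall_mem_nhds x one_pos) ?_ ?_ ?_ ?_ ?_ ?_).2
  · exact Eventually.of_forall fun x => (hc x).aestronglyMeasurable
  · exact (hc x).intervalIntegrable _ _
  · exact (hc₁ x).aestronglyMeasurable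
  · exact Eventually.of_forall fun b hb y hy => hC (y, b) ⟨hy, uIoc_subset_uIcc hb⟩
  · simp
  · exact Eventually.of_forall fun b _ y _ => h y b

/-- The primitive `(x, s) ↦ ∫_c^s f(x, b) db` is jointly as smooth as `f`: its `s`-derivative is `f`
and its `x`-derivative is the primitive of `∂f/∂x`, which allows an induction on the order. -/
lemma contDiff_integral_param (c : ℝ) (k : ℕ) : ∀ f : ℝ → ℝ → ℝ, ContDiff ℝ k (uncurry f) →
    ContDiff ℝ k (uncurry fun x s => ∫ b in c..s, f x b) := by
  induction k with
  | zero =>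
    intro f hf
    simp only [Nat.cast_zero, contDiff_zero] at hf ⊢
    exact intervalIntegral.continuous_parametric_primitive_of_continuous hf
  | succ k ih =>
    intro f hf
    push_cast at hf ⊢
    have hd : ∀ x b, HasDerivAt (fun s => f s b) (fderiv ℝ (uncurry f) (x, b) (1, 0)) x := by
      intro x b
      have h1 := (hf.differentiable (by simp) (x, b)).hasFDerivAt
      exact h1.comp_hasDerivAt (f := fun s => (s, b)) x
        ((hasDerivAt_id x).prodMk (hasDerivAt_const x b))
    have hc : ContDiff ℝ k (uncurry fun x b => fderiv ℝ (uncurry f) (x, b) (1, 0)) :=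
      (hf.fderiv_right (m := k) le_rfl).clm_apply contDiff_const
    refine contDiff_succ_of_partials (F₁ := fun x s => ∫ b in c..s, _) (F₂ := f)
      (fun x s => hasDerivAt_integral_param hf.continuous hc.continuous hd c s x) ?_
      (ih _ hc) (hf.of_le (by exact_mod_cast Nat.le_succ k))
    intro x s
    have hfx : Continuous (f x) := hf.continuous.comp (by fun_prop : Continuous fun b => (x, b))
    exact intervalIntegral.integral_hasDerivAt_right (hfx.intervalIntegrable _ _)
      (hfx.stronglyMeasurableAtFilter _ _) hfx.continuousAt

lemma hasDerivAt_goursat_fst {f : ℝ → ℝ → ℝ} (hf : Continuous (uncurry f)) (a₀ b₀ x y : ℝ) :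
    HasDerivAt (fun x => ∫ a in a₀..x, ∫ b in b₀..y, f a b) (∫ b in b₀..y, f x b) x := by
  have h : Continuous fun a => ∫ b in b₀..y, f a b :=
    intervalIntegral.continuous_parametric_intervalIntegral_of_continuous hf continuous_const
  exact intervalIntegral.integral_hasDerivAt_right (h.intervalIntegrable _ _)
      (h.stronglyMeasurableAtFilter _ _) h.continuousAt

lemma hasDerivAt_goursat_snd {f : ℝ → ℝ → ℝ} (hf : Continuous (uncurry f)) (a₀ b₀ x y : ℝ) :
    HasDerivAt (fun y => ∫ a in a₀..x, ∫ b in b₀..y, f a b) (∫ a in a₀..x, f a y) y := by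
  refine hasDerivAt_integral_param (f := fun y a => ∫ b in b₀..y, f a b)
    (f₁ := fun y a => f a y) ?_ (hf.comp continuous_swap) ?_ a₀ x y
  · exact (intervalIntegral.continuous_parametric_primitive_of_continuous hf).comp continuous_swap
  · intro y a
    have hfx : Continuous (f a) := hf.comp (by fun_prop : Continuous fun b => (a, b))
    exact intervalIntegral.integral_hasDerivAt_right (hfx.intervalIntegrable _ _)
      (hfx.stronglyMeasurableAtFilter _ _) hfx.continuousAt

/-- The Goursat integral operator gains one derivative. This is what turns a continuous solution
of the Goursat integral equation into a smooth one. -/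
lemma contDiff_succ_goursat {f : ℝ → ℝ → ℝ} {k : ℕ} (hf : ContDiff ℝ k (uncurry f)) (a₀ b₀ : ℝ) :
    ContDiff ℝ (k + 1) (uncurry fun x y => ∫ a in a₀..x, ∫ b in b₀..y, f a b) := by
  refine contDiff_succ_of_partials
    (fun x y => hasDerivAt_goursat_fst hf.continuous a₀ b₀ x y)
    (fun x y => hasDerivAt_goursat_snd hf.continuous a₀ b₀ x y)
    (contDiff_integral_param b₀ k f hf) ?_
  have := contDiff_integral_param a₀ k (fun y a => f a y) (hf.comp (contDiff_snd.prodMk contDiff_fst))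
  exact this.comp (contDiff_snd.prodMk contDiff_fst)

/-! ### The characteristic equation `∂_a ∂_b d = q d` -/

/-- Uniqueness for `∂_a ∂_b d = q d` on a rectangle that is small compared with `sup |q|`, where
`e` stands for `∂_b d`. It is enough that `e` vanishes somewhere on each horizontal line and `d`
somewhere on each vertical line, so the statement covers data on two characteristics as well as
Cauchy data on the diagonal. Two applications of the mean value inequality bound `sup |d|` by a
constant less than one times itself. -/
lemma goursat_unique {d e q : ℝ → ℝ → ℝ} {a₁ a₂ b₁ b₂ C : ℝ}
    (hcont : ContinuousOn (uncurry d) (Icc a₁ a₂ ×ˢ Icc b₁ b₂))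
    (hd : ∀ a ∈ Icc a₁ a₂, ∀ b ∈ Icc b₁ b₂, HasDerivAt (fun s => d a s) (e a b) b)
    (he : ∀ a ∈ Icc a₁ a₂, ∀ b ∈ Icc b₁ b₂, HasDerivAt (fun s => e s b) (q a b * d a b) a)
    (hq : ∀ a ∈ Icc a₁ a₂, ∀ b ∈ Icc b₁ b₂, |q a b| ≤ C)
    (hC : C * (a₂ - a₁) * (b₂ - b₁) < 1)
    (he₀ : ∀ b ∈ Icc b₁ b₂, ∃ a ∈ Icc a₁ a₂, e a b = 0)
    (hd₀ : ∀ a ∈ Icc a₁ a₂, ∃ b ∈ Icc b₁ b₂, d a b = 0) :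
    ∀ a ∈ Icc a₁ a₂, ∀ b ∈ Icc b₁ b₂, d a b = 0 := by
  intro a ha b hb
  obtain ⟨⟨am, bm⟩, ⟨ham, hbm⟩, hmax⟩ := (isCompact_Icc.prod isCompact_Icc).exists_isMaxOn
    ⟨(a, b), ⟨ha, hb⟩⟩ hcont.norm
  have hS : ∀ a ∈ Icc a₁ a₂, ∀ b ∈ Icc b₁ b₂, |d a b| ≤ |d am bm| :=
    fun a ha b hb => hmax (show (a, b) ∈ Icc a₁ a₂ ×ˢ Icc b₁ b₂ from ⟨ha, hb⟩)
  have hC₀ : 0 ≤ C := (abs_nonneg _).trans (hq a ha b hb)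
  have hE : ∀ a ∈ Icc a₁ a₂, ∀ b ∈ Icc b₁ b₂, |e a b| ≤ C * |d am bm| * (a₂ - a₁) := by
    intro a ha b hb
    obtain ⟨a₀, ha₀, h0⟩ := he₀ b hb
    have := (convex_Icc a₁ a₂).norm_image_sub_le_of_norm_hasDerivWithin_le
      (f := fun s => e s b) (C := C * |d am bm|)
      (fun s hs => (he s hs b hb).hasDerivWithinAt)
      (fun s hs => by
        rw [Real.norm_eq_abs, abs_mul]
        exact mul_le_mul (hq s hs b hb) (hS s hs b hb) (abs_nonneg _) hC₀) ha₀ ha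
    simp only [h0, sub_zero, Real.norm_eq_abs] at this
    refine this.trans (mul_le_mul_of_nonneg_left ?_ (by positivity))
    rw [abs_le]; constructor <;> linarith [ha.1, ha.2, ha₀.1, ha₀.2]
  have hK : |d am bm| ≤ C * |d am bm| * (a₂ - a₁) * (b₂ - b₁) := by
    obtain ⟨b₀, hb₀, h0⟩ := hd₀ am ham
    have := (convex_Icc b₁ b₂).norm_image_sub_le_of_norm_hasDerivWithin_le
      (f := fun s => d am s)
      (fun s hs => (hd am ham s hs).hasDerivWithinAt)
      (fun s hs => hE am ham s hs) hb₀ hbm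
    simp only [h0, sub_zero, Real.norm_eq_abs] at this
    refine this.trans (mul_le_mul_of_nonneg_left ?_ ((abs_nonneg _).trans (hE a ha b hb)))
    rw [abs_le]; constructor <;> linarith [hbm.1, hbm.2, hb₀.1, hb₀.2]
  have h0 : |d am bm| = 0 := by
    by_contra hne
    have hpos : 0 < |d am bm| := lt_of_le_of_ne (abs_nonneg _) (Ne.symm hne)
    nlinarith
  have := hS a ha b hb
  rw [h0] at this
  exact abs_nonpos_iff.1 this

/-- A smooth bounded function equal to the identity on `[-ρ, ρ]`. Composing with it extends a
problem posed on a rectangle to the whole plane while keeping all functions bounded. -/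
lemma exists_smooth_clamp {ρ : ℝ} (hρ : 0 < ρ) : ∃ σ : ℝ → ℝ, ContDiff ℝ ∞ σ ∧
    (∀ x, |x| ≤ ρ → σ x = x) ∧ ∀ x, |σ x| ≤ 2 * ρ := by
  let χ : ContDiffBump (0 : ℝ) := ⟨ρ, 2 * ρ, hρ, by linarith⟩
  refine ⟨fun x => χ x * x, χ.contDiff.mul contDiff_id, fun x hx => ?_, fun x => ?_⟩
  · beta_reduce
    rw [χ.one_of_mem_closedBall (by simpa [χ] using hx), one_mul]
  · rcases le_or_gt (2 * ρ) |x| with h | h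
    · beta_reduce
      rw [χ.zero_of_le_dist (by simpa [χ] using h)]
      simp [hρ.le]
    · beta_reduce
      rw [abs_mul, abs_of_nonneg χ.nonneg]
      nlinarith [χ.le_one (x := x), χ.nonneg (x := x), abs_nonneg x]

lemma abs_double_integral_le {f : ℝ → ℝ → ℝ} {K ρ δ a₀ b₀ x y : ℝ} (hδ : 0 ≤ δ)
    (ha₀ : |a₀| ≤ ρ) (hx : |x| ≤ ρ) (hb₀ : |b₀| ≤ δ) (hy : |y| ≤ δ)
    (hf : ∀ a b, |a| ≤ ρ → |b| ≤ δ → |f a b| ≤ K) :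
    |∫ a in a₀..x, ∫ b in b₀..y, f a b| ≤ K * (2 * δ) * (2 * ρ) := by
  have key : ∀ {c z t r : ℝ}, |c| ≤ r → |z| ≤ r → t ∈ uIoc c z → |t| ≤ r := by
    intro c z t r hc hz ht
    have := uIoc_subset_uIcc ht
    rw [abs_le] at *
    exact ⟨(le_inf hc.1 hz.1).trans this.1, this.2.trans (sup_le hc.2 hz.2)⟩
  have hK : 0 ≤ K := (abs_nonneg _).trans (hf a₀ b₀ ha₀ hb₀)
  have h1 : ∀ a ∈ uIoc a₀ x, ‖∫ b in b₀..y, f a b‖ ≤ K * (2 * δ) := by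
    intro a ha
    refine (intervalIntegral.norm_integral_le_of_norm_le_const
      (fun b hb => hf a b (key ha₀ hx ha) (key hb₀ hy hb))).trans ?_
    exact mul_le_mul_of_nonneg_left (by linarith [abs_sub y b₀]) hK
  refine (intervalIntegral.norm_integral_le_of_norm_le_const h1).trans ?_
  exact mul_le_mul_of_nonneg_left (by linarith [abs_sub x a₀]) (by positivity)

open scoped BoundedContinuousFunction in
/-- On a rectangle of small area the integral form of `∂_a ∂_b y = q y`, with `y(·, b₀) = g` and
`y(a₀, ·)` constant, has a solution that is smooth on the whole plane. After both variables are
clamped, the integral operator is a contraction of the bounded continuous functions on `ℝ²`; its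
fixed point is smooth because the operator gains a derivative. -/
lemma exists_goursat_solution {q : ℝ → ℝ → ℝ} {g : ℝ → ℝ} (hq : ContDiff ℝ ∞ (uncurry q))
    (hg : ContDiff ℝ ∞ g) {ρ δ a₀ b₀ C : ℝ} (hρ : 0 < ρ) (hδ : 0 < δ) (ha₀ : |a₀| ≤ ρ)
    (hb₀ : |b₀| ≤ δ) (hC : ∀ a b, |a| ≤ 2 * ρ → |b| ≤ 2 * δ → |q a b| ≤ C)
    (hsmall : C * (2 * (2 * δ)) * (2 * (2 * ρ)) ≤ 1 / 2) :
    ∃ y : ℝ → ℝ → ℝ, ContDiff ℝ ∞ (uncurry y) ∧ ∀ x z, |x| ≤ ρ → |z| ≤ δ →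
      y x z = g x + ∫ a in a₀..x, ∫ b in b₀..z, q a b * y a b := by
  obtain ⟨σ, hσ, hσid, hσb⟩ := exists_smooth_clamp hρ
  obtain ⟨τ, hτ, hτid, hτb⟩ := exists_smooth_clamp hδ
  have ha₀' : |a₀| ≤ 2 * ρ := by linarith
  have hb₀' : |b₀| ≤ 2 * δ := by linarith
  obtain ⟨G, hG⟩ := (isCompact_Icc (a := -(2 * ρ)) (b := 2 * ρ)).exists_bound_of_continuousOn
    hg.continuous.continuousOn
  let H : (ℝ × ℝ →ᵇ ℝ) → ℝ → ℝ → ℝ := fun y x z => ∫ a in a₀..x, ∫ b in b₀..z, q a b * y (a, b)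
  have hcq : ∀ y : ℝ × ℝ →ᵇ ℝ, Continuous (uncurry fun a b => q a b * y (a, b)) :=
    fun y => hq.continuous.mul y.continuous
  have hHc : ∀ y, Continuous (uncurry (H y)) := fun y => by
    have := contDiff_succ_goursat (k := 0) (f := fun a b => q a b * y (a, b))
      (by simpa using hcq y) a₀ b₀
    exact this.continuous
  have hHb : ∀ y x z, |H y (σ x) (τ z)| ≤ C * ‖y‖ * (2 * (2 * δ)) * (2 * (2 * ρ)) := by
    intro y x z
    refine abs_double_integral_le (by positivity) ha₀' (hσb x) hb₀' (hτb z) ?_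
    intro a b ha hb
    rw [abs_mul]
    exact mul_le_mul (hC a b ha hb) (y.norm_coe_le_norm _) (abs_nonneg _)
      ((abs_nonneg _).trans (hC a b ha hb))
  let T : (ℝ × ℝ →ᵇ ℝ) → (ℝ × ℝ →ᵇ ℝ) := fun y =>
    BoundedContinuousFunction.ofNormedAddCommGroup (fun p => g (σ p.1) + H y (σ p.1) (τ p.2))
      (by
        have h1 := hg.continuous
        have h2 := hσ.continuous
        have h3 := hτ.continuous
        have h4 : Continuous fun p : ℝ × ℝ => (σ p.1, τ p.2) := by fun_prop
        exact (h1.comp (h2.comp continuous_fst)).add ((hHc y).comp h4))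
      (G + C * ‖y‖ * (2 * (2 * δ)) * (2 * (2 * ρ)))
      (fun p => (norm_add_le _ _).trans (add_le_add (hG _ (abs_le.1 (hσb _))) (hHb y p.1 p.2)))
  -- The doubled bounds in `hsmall` account for the clamps taking values in `[-2ρ, 2ρ]`
  -- and `[-2δ, 2δ]`.
  have hT : ContractingWith (1 / 2) T := by
    refine ⟨by rw [← NNReal.coe_lt_coe]; norm_num, LipschitzWith.of_dist_le_mul fun y₁ y₂ => ?_⟩
    rw [BoundedContinuousFunction.dist_le (by positivity)]
    intro p
    have hsub : T y₁ p - T y₂ p = H (y₁ - y₂) (σ p.1) (τ p.2) := by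
      simp only [T, H, BoundedContinuousFunction.coe_ofNormedAddCommGroup, add_sub_add_left_eq_sub]
      have hi : ∀ (y : ℝ × ℝ →ᵇ ℝ) a, Continuous fun b => q a b * y (a, b) := fun y a =>
        (hcq y).comp (by fun_prop : Continuous fun b => (a, b))
      have ho : ∀ y : ℝ × ℝ →ᵇ ℝ, Continuous fun a => ∫ b in b₀..τ p.2, q a b * y (a, b) :=
        fun y => intervalIntegral.continuous_parametric_intervalIntegral_of_continuous (hcq y)
          continuous_const
      rw [← intervalIntegral.integral_sub ((ho _).intervalIntegrable _ _)
        ((ho _).intervalIntegrable _ _)]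
      congr 1 with a
      rw [← intervalIntegral.integral_sub ((hi _ a).intervalIntegrable _ _)
        ((hi _ a).intervalIntegrable _ _)]
      congr 1 with b
      simp [mul_sub]
    rw [Real.dist_eq, hsub, dist_eq_norm]
    refine (hHb _ _ _).trans ?_
    have := mul_le_mul_of_nonneg_right hsmall (norm_nonneg (y₁ - y₂))
    push_cast
    linarith
  have hfix : T hT.fixedPoint = hT.fixedPoint := hT.fixedPoint_isFixedPt
  set y := hT.fixedPoint with hy
  have hval : ∀ p, y p = g (σ p.1) + H y (σ p.1) (τ p.2) := fun p =>
    (DFunLike.congr_fun hfix p).symm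
  have hsm : ∀ k : ℕ, ContDiff ℝ k y := by
    intro k
    induction k with
    | zero => simpa using y.continuous
    | succ k ih =>
      have hk : ContDiff ℝ k (uncurry fun a b => q a b * y (a, b)) :=
        (hq.of_le (by exact_mod_cast le_top)).mul ih
      have h1 : ContDiff ℝ (k + 1) (uncurry (H y)) := contDiff_succ_goursat hk a₀ b₀
      have hle : ((k : ℕ∞ω) + 1) ≤ ∞ := by exact_mod_cast le_top
      have h2 : ContDiff ℝ (k + 1) fun p : ℝ × ℝ => (σ p.1, τ p.2) :=
        ((hσ.of_le hle).comp contDiff_fst).prodMk ((hτ.of_le hle).comp contDiff_snd)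
      have h3 : ContDiff ℝ (k + 1) fun p : ℝ × ℝ => g (σ p.1) :=
        (hg.of_le hle).comp ((hσ.of_le hle).comp contDiff_fst)
      have h4 : (y : ℝ × ℝ → ℝ) = fun p => g (σ p.1) + uncurry (H y) (σ p.1, τ p.2) :=
        funext hval
      push_cast
      rw [h4]
      exact h3.add (h1.comp h2)
  refine ⟨fun a b => y (a, b), contDiff_infty.2 hsm, fun x z hx hz => ?_⟩
  beta_reduce
  rw [hval, hσid x hx, hτid z hz]

/-! ### Smoothness up to the characteristic boundary -/

/-- A solution of `∂_μ ∂_ν v = q v` on the open quadrant that vanishes near the corner agrees, on a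
thin strip `(0, B] × (0, δ]` along the edge `ν = 0`, with a function that is smooth on the whole
plane. That function solves the Goursat problem with data on the characteristics `ν = δ` and
`μ = s₀`; on the latter `v` vanishes, and both belong to the region where `v` is smooth. Here `vν`
stands for `∂_ν v`. -/
lemma exists_smooth_extension {q v vν : ℝ → ℝ → ℝ} (hq : ContDiff ℝ ∞ (uncurry q))
    (hv : ContDiffOn ℝ ∞ (uncurry v) (Ioi 0 ×ˢ Ioi 0))
    (hvν : ∀ a b, 0 < a → 0 < b → HasDerivAt (fun s => v a s) (vν a b) b)
    (hvμν : ∀ a b, 0 < a → 0 < b → HasDerivAt (fun s => vν s b) (q a b * v a b) a)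
    {s₀ B : ℝ} (hs₀ : 0 < s₀) (hB : s₀ ≤ B)
    (hv₀ : ∀ a b, a ∈ Ioc 0 s₀ → b ∈ Ioc 0 s₀ → v a b = 0) :
    ∃ y : ℝ → ℝ → ℝ, ContDiff ℝ ∞ (uncurry y) ∧ ∃ δ > 0, ∀ a ∈ Ioc 0 B, ∀ b ∈ Ioc 0 δ,
      v a b = y a b := by
  have hBpos : 0 < B := hs₀.trans_le hB
  obtain ⟨C, hC⟩ := ((isCompact_Icc (a := -(2 * B)) (b := 2 * B)).prod
    (isCompact_Icc (a := -2) (b := (2 : ℝ)))).exists_bound_of_continuousOn hq.continuous.continuousOn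
  have hC₀ : 0 ≤ C := (norm_nonneg _).trans
    (hC (0, 0) ⟨⟨by linarith, by linarith⟩, by norm_num, by norm_num⟩)
  -- The strip is so thin that the integral operator is a contraction on it.
  obtain ⟨δ, hδ, hδ1, hδs, hδC⟩ : ∃ δ > 0, δ ≤ 1 ∧ δ ≤ s₀ / 2 ∧ C * B * δ ≤ 1 / 32 := by
    refine ⟨min (min 1 (s₀ / 2)) (1 / (32 * (C + 1) * B)), by positivity,
      (min_le_left _ _).trans (min_le_left _ _), (min_le_left _ _).trans (min_le_right _ _), ?_⟩
    calc C * B * _ ≤ C * B * (1 / (32 * (C + 1) * B)) :=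
          mul_le_mul_of_nonneg_left (min_le_right _ _) (by positivity)
      _ = C / (C + 1) * (1 / 32) := by field_simp
      _ ≤ 1 * (1 / 32) := by
          refine mul_le_mul_of_nonneg_right ?_ (by norm_num)
          rw [div_le_one (by linarith)]; linarith
      _ = 1 / 32 := one_mul _
  -- Since `v(·, δ)` vanishes on `(0, s₀]`, extending it by zero to the left keeps it smooth.
  let g : ℝ → ℝ := fun x => if s₀ / 2 < x then v x δ else 0
  have hgv : ∀ x, 0 < x → g x = v x δ := by
    intro x hx
    by_cases h : s₀ / 2 < x
    · simp [g, h]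
    · simp only [g, h, if_false]
      exact (hv₀ x δ ⟨hx, by linarith [not_lt.1 h]⟩ ⟨hδ, by linarith⟩).symm
  have hg : ContDiff ℝ ∞ g := by
    rw [contDiff_iff_contDiffAt]
    intro x
    rcases lt_or_ge x (s₀ / 2) with h | h
    · refine (contDiffAt_const (c := (0 : ℝ))).congr_of_eventuallyEq ?_
      filter_upwards [Iio_mem_nhds h] with z hz
      simp [g, not_lt.2 (mem_Iio.1 hz).le]
    · have hx : 0 < x := by linarith
      have h1 : ContDiffAt ℝ ∞ (uncurry v) (x, δ) :=
        hv.contDiffAt ((isOpen_Ioi.prod isOpen_Ioi).mem_nhds ⟨hx, hδ⟩)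
      have h2 : ContDiffAt ℝ ∞ (fun z => uncurry v (z, δ)) x :=
        h1.comp x (contDiffAt_id.prodMk contDiffAt_const)
      refine h2.congr_of_eventuallyEq ?_
      filter_upwards [Ioi_mem_nhds hx] with z hz
      exact hgv z hz
  have hbound : ∀ a b, |a| ≤ 2 * B → |b| ≤ 2 * δ → |q a b| ≤ C := fun a b ha hb =>
    hC (a, b) ⟨abs_le.1 ha, abs_le.1 (by linarith : |b| ≤ 2)⟩
  have hsmall : C * (2 * (2 * δ)) * (2 * (2 * B)) ≤ 1 / 2 := by nlinarith
  obtain ⟨y, hy, hyeq⟩ := exists_goursat_solution hq hg (a₀ := s₀) (b₀ := δ) hBpos hδ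
    (by rwa [abs_of_pos hs₀]) (by rw [abs_of_pos hδ]) hbound hsmall
  refine ⟨y, hy, δ, hδ, fun a ha b hb => ?_⟩
  have hf : ContDiff ℝ ∞ (uncurry fun a b => q a b * y a b) := hq.mul hy
  have hrect : ∀ a' ∈ Icc (min a s₀) B, ∀ b' ∈ Icc b δ, 0 < a' ∧ 0 < b' ∧ |a'| ≤ B ∧ |b'| ≤ δ := by
    intro a' ha' b' hb'
    have h1 : 0 < a' := (lt_min ha.1 hs₀).trans_le ha'.1
    have h2 : 0 < b' := hb.1.trans_le hb'.1
    exact ⟨h1, h2, by rw [abs_of_pos h1]; exact ha'.2, by rw [abs_of_pos h2]; exact hb'.2⟩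
  -- `v` is compared with `Y` instead of `y`, since `y` satisfies the integral equation only for
  -- arguments in the rectangle, while derivatives at the edges need a neighbourhood.
  let Y : ℝ → ℝ → ℝ := fun x z => g x + ∫ a in s₀..x, ∫ b in δ..z, q a b * y a b
  have hYc : Continuous (uncurry Y) := by
    have := (contDiff_succ_goursat (k := 0) (hf.of_le (by simp)) s₀ δ).continuous
    exact (hg.continuous.comp continuous_fst).add this
  have hzero := goursat_unique (q := q) (d := fun a b => v a b - Y a b) (C := C)
    (e := fun a b => vν a b - ∫ a' in s₀..a, q a' b * y a' b)
    (a₁ := min a s₀) (a₂ := B) (b₁ := b) (b₂ := δ) ?_ ?_ ?_ ?_ ?_ ?_ ?_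
    a ⟨min_le_left _ _, ha.2⟩ b ⟨le_rfl, hb.2⟩
  · obtain ⟨-, -, h3, h4⟩ := hrect a ⟨min_le_left _ _, ha.2⟩ b ⟨le_rfl, hb.2⟩
    rw [hyeq a b h3 h4]
    exact sub_eq_zero.1 hzero
  · refine (hv.continuousOn.mono ?_).sub hYc.continuousOn
    rintro ⟨a', b'⟩ ⟨h1, h2⟩
    exact ⟨(hrect a' h1 b' h2).1, (hrect a' h1 b' h2).2.1⟩
  · intro a' ha' b' hb'
    obtain ⟨h1, h2, h3, h4⟩ := hrect a' ha' b' hb'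
    exact (hvν a' b' h1 h2).sub ((hasDerivAt_goursat_snd hf.continuous s₀ δ a' b').const_add _)
  · intro a' ha' b' hb'
    obtain ⟨h1, h2, h3, h4⟩ := hrect a' ha' b' hb'
    have hc : Continuous fun a => q a b' * y a b' :=
      hf.continuous.comp (by fun_prop : Continuous fun a => (a, b'))
    have := (hvμν a' b' h1 h2).sub (intervalIntegral.integral_hasDerivAt_right
      (hc.intervalIntegrable s₀ a') (hc.stronglyMeasurableAtFilter _ _) hc.continuousAt)
    have e : q a' b' * (v a' b' - Y a' b') = q a' b' * v a' b' - q a' b' * y a' b' := by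
      rw [hyeq a' b' h3 h4]
      simp only [Y]
      ring
    simp only [e]
    exact this
  · intro a' ha' b' hb'
    obtain ⟨h1, h2, h3, h4⟩ := hrect a' ha' b' hb'
    exact hbound a' b' (by linarith) (by linarith)
  · have h1 : B - min a s₀ ≤ B := by linarith [lt_min ha.1 hs₀]
    have h2 : δ - b ≤ δ := by linarith [hb.1]
    calc C * (B - min a s₀) * (δ - b) ≤ C * B * δ := by
          refine mul_le_mul (mul_le_mul_of_nonneg_left h1 hC₀) h2 (by linarith [hb.2])
            (by positivity)
      _ < 1 := by linarith
  · intro b' hb'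
    refine ⟨s₀, ⟨min_le_right _ _, hB⟩, ?_⟩
    have hbpos' : 0 < b' := hb.1.trans_le hb'.1
    have h1 : HasDerivAt (fun s => v s₀ s) 0 b' := by
      refine (hasDerivAt_const b' (0 : ℝ)).congr_of_eventuallyEq ?_
      filter_upwards [Ioo_mem_nhds hbpos' (by linarith [hb'.2] : b' < s₀)] with z hz
      exact hv₀ _ _ ⟨hs₀, le_rfl⟩ ⟨hz.1, hz.2.le⟩
    simp [(hvν s₀ b' hs₀ hbpos').unique h1]
  · intro a' ha'
    refine ⟨δ, ⟨hb.2, le_rfl⟩, ?_⟩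
    simp [Y, hgv a' ((lt_min ha.1 hs₀).trans_le ha'.1)]

/-- A solution of `∂_μ ∂_ν v = q v` whose Cauchy data vanish on the diagonal near the corner
vanishes near the corner. -/
lemma exists_vanishing_square {q v vν : ℝ → ℝ → ℝ} (hq : ContDiff ℝ ∞ (uncurry q))
    (hv : ContDiffOn ℝ ∞ (uncurry v) (Ioi 0 ×ˢ Ioi 0))
    (hvν : ∀ a b, 0 < a → 0 < b → HasDerivAt (fun s => v a s) (vν a b) b)
    (hvμν : ∀ a b, 0 < a → 0 < b → HasDerivAt (fun s => vν s b) (q a b * v a b) a)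
    {s₁ : ℝ} (hs₁ : 0 < s₁) (hdiag : ∀ s ∈ Ioo 0 s₁, v s s = 0 ∧ vν s s = 0) :
    ∃ s₀ > 0, ∀ a b, a ∈ Ioc 0 s₀ → b ∈ Ioc 0 s₀ → v a b = 0 := by
  obtain ⟨C, hC⟩ := ((isCompact_Icc (a := 0) (b := (1 : ℝ))).prod
    (isCompact_Icc (a := 0) (b := (1 : ℝ)))).exists_bound_of_continuousOn hq.continuous.continuousOn
  have hC₀ : 0 ≤ C := (norm_nonneg _).trans
    (hC (0, 0) ⟨by norm_num, by norm_num⟩)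
  obtain ⟨s₀, hs₀, h1, hs, hsC⟩ : ∃ s > 0, s ≤ 1 ∧ s < s₁ ∧ C * s < 1 := by
    refine ⟨min (min 1 (s₁ / 2)) (1 / (C + 1)), by positivity,
      (min_le_left _ _).trans (min_le_left _ _), ?_, ?_⟩
    · have := (min_le_left (min 1 (s₁ / 2)) (1 / (C + 1))).trans (min_le_right _ _)
      linarith
    · calc C * _ ≤ C * (1 / (C + 1)) := mul_le_mul_of_nonneg_left (min_le_right _ _) hC₀
        _ < 1 := by rw [mul_one_div, div_lt_one (by linarith)]; linarith
  refine ⟨s₀, hs₀, fun a b ha hb => ?_⟩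
  have hε : 0 < min a b := lt_min ha.1 hb.1
  have hεs : min a b ≤ s₀ := (min_le_left _ _).trans ha.2
  refine goursat_unique (q := q) (d := v) (C := C) (e := vν) (a₁ := min a b) (a₂ := s₀)
    (b₁ := min a b) (b₂ := s₀) ?_ ?_ ?_ ?_ ?_ ?_ ?_ a ⟨min_le_left _ _, ha.2⟩ b
    ⟨min_le_right _ _, hb.2⟩
  · exact hv.continuousOn.mono fun p hp => ⟨hε.trans_le hp.1.1, hε.trans_le hp.2.1⟩
  · exact fun a ha b hb => hvν a b (hε.trans_le ha.1) (hε.trans_le hb.1)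
  · exact fun a ha b hb => hvμν a b (hε.trans_le ha.1) (hε.trans_le hb.1)
  · exact fun a ha b hb => hC (a, b) ⟨⟨hε.le.trans ha.1, ha.2.trans h1⟩,
      ⟨hε.le.trans hb.1, hb.2.trans h1⟩⟩
  · have h2 : s₀ - min a b ≤ s₀ := by linarith
    have h3 : s₀ - min a b ≤ 1 := by linarith
    calc C * (s₀ - min a b) * (s₀ - min a b) ≤ C * s₀ * 1 :=
          mul_le_mul (mul_le_mul_of_nonneg_left h2 hC₀) h3 (by linarith) (by positivity)
      _ < 1 := by linarith
  · exact fun b hb => ⟨b, hb, (hdiag b ⟨hε.trans_le hb.1, hb.2.trans_lt hs⟩).2⟩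
  · exact fun b hb => ⟨b, hb, (hdiag b ⟨hε.trans_le hb.1, hb.2.trans_lt hs⟩).1⟩

/-- If near each point of `K` the function `v` coincides on `A` with a function smooth in a full
neighbourhood, then the continuous extension of `v` from `A` is smooth on `K`. -/
lemma contDiffOn_extendFrom {A K : Set (ℝ × ℝ)} {v : ℝ × ℝ → ℝ} (hK : K ⊆ closure A)
    (h : ∀ p ∈ K, ∃ (y : ℝ × ℝ → ℝ) (N : Set (ℝ × ℝ)), IsOpen N ∧ p ∈ N ∧ ContDiffOn ℝ ∞ y N ∧
      ∀ z ∈ N ∩ A, v z = y z) :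
    ContDiffOn ℝ ∞ (extendFrom A v) K := by
  intro p hp
  obtain ⟨y, N, hN, hpN, hy, hvy⟩ := h p hp
  have key : ∀ z ∈ N ∩ K, extendFrom A v z = y z := by
    intro z hz
    refine extendFrom_eq (hK hz.2) ?_
    have h1 : Tendsto y (nhdsWithin z A) (nhds (y z)) :=
      ((hy.continuousOn.continuousAt (hN.mem_nhds hz.1)).tendsto).mono_left nhdsWithin_le_nhds
    refine h1.congr' ?_
    filter_upwards [self_mem_nhdsWithin, mem_nhdsWithin_of_mem_nhds (hN.mem_nhds hz.1)] with x h2 h3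
    exact (hvy x ⟨h3, h2⟩).symm
  refine ((hy.contDiffAt (hN.mem_nhds hpN)).contDiffWithinAt).congr_of_eventuallyEq ?_
    (key p ⟨hpN, hp⟩)
  filter_upwards [self_mem_nhdsWithin, mem_nhdsWithin_of_mem_nhds (hN.mem_nhds hpN)] with x h2 h3
  exact key x ⟨h3, h2⟩

/-- A solution of `∂_μ ∂_ν v = q v` on the open quadrant whose Cauchy data vanish on the diagonal
near the corner extends smoothly to the closed quadrant. Here `vμ` and `vν` stand for the first
partial derivatives; the edge `μ = 0` is reduced to `ν = 0` by exchanging the variables. -/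
lemma contDiffOn_extendFrom_quadrant {q v vν vμ : ℝ → ℝ → ℝ} (hq : ContDiff ℝ ∞ (uncurry q))
    (hv : ContDiffOn ℝ ∞ (uncurry v) (Ioi 0 ×ˢ Ioi 0))
    (hvν : ∀ a b, 0 < a → 0 < b → HasDerivAt (fun s => v a s) (vν a b) b)
    (hvμν : ∀ a b, 0 < a → 0 < b → HasDerivAt (fun s => vν s b) (q a b * v a b) a)
    (hvμ : ∀ a b, 0 < a → 0 < b → HasDerivAt (fun s => v s b) (vμ a b) a)
    (hvνμ : ∀ a b, 0 < a → 0 < b → HasDerivAt (fun s => vμ a s) (q a b * v a b) b)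
    {s₁ : ℝ} (hs₁ : 0 < s₁) (hdiag : ∀ s ∈ Ioo 0 s₁, v s s = 0 ∧ vν s s = 0) :
    ContDiffOn ℝ ∞ (extendFrom (Ioi 0 ×ˢ Ioi 0) (uncurry v)) (Ici 0 ×ˢ Ici 0) := by
  obtain ⟨s₀, hs₀, hv₀⟩ := exists_vanishing_square hq hv hvν hvμν hs₁ hdiag
  refine contDiffOn_extendFrom (by rw [closure_prod_eq, closure_Ioi]) ?_
  rintro ⟨μ, ν⟩ ⟨hμ, hν⟩
  simp only [mem_Ici] at hμ hν
  rcases hν.eq_or_lt with rfl | hν'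
  · obtain ⟨y, hy, δ, hδ, hvy⟩ := exists_smooth_extension hq hv hvν hvμν hs₀
      (B := max s₀ (μ + 1)) (le_max_left _ _) hv₀
    refine ⟨uncurry y, Iio (μ + 1) ×ˢ Iio δ, isOpen_Iio.prod isOpen_Iio, ⟨by simp, hδ⟩,
      hy.contDiffOn, ?_⟩
    rintro ⟨a, b⟩ ⟨⟨h1, h2⟩, h3, h4⟩
    exact hvy a ⟨h3, (le_of_lt h1).trans (le_max_right _ _)⟩ b ⟨h4, le_of_lt h2⟩
  rcases hμ.eq_or_lt with rfl | hμ'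
  · have hsw : ContDiff ℝ ∞ fun p : ℝ × ℝ => (p.2, p.1) := contDiff_snd.prodMk contDiff_fst
    obtain ⟨y, hy, δ, hδ, hvy⟩ := exists_smooth_extension (q := fun a b => q b a)
      (v := fun a b => v b a) (vν := fun a b => vμ b a) (hq.comp hsw)
      (hv.comp hsw.contDiffOn fun p hp => ⟨hp.2, hp.1⟩)
      (fun a b ha hb => hvμ b a hb ha) (fun a b ha hb => hvνμ b a hb ha) hs₀
      (B := max s₀ (ν + 1)) (le_max_left _ _) (fun a b ha hb => hv₀ b a hb ha)
    refine ⟨fun p => y p.2 p.1, Iio δ ×ˢ Iio (ν + 1), isOpen_Iio.prod isOpen_Iio, ⟨hδ, by simp⟩,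
      (hy.comp hsw).contDiffOn, ?_⟩
    rintro ⟨a, b⟩ ⟨⟨h1, h2⟩, h3, h4⟩
    exact hvy b ⟨h4, (le_of_lt h2).trans (le_max_right _ _)⟩ a ⟨h3, le_of_lt h1⟩
  · exact ⟨uncurry v, Ioi 0 ×ˢ Ioi 0, isOpen_Ioi.prod isOpen_Ioi, ⟨hμ', hν'⟩, hv, fun _ _ => rfl⟩

/-! ### The area radius as a function of `μ ν` -/

/-- The function `r ↦ e^{r/(2M)} (r - 2M)` is strictly increasing on `[0, ∞)` and has a smooth
inverse `R` on `(-2M, ∞)`. In particular `R` is smooth near `0`, that is, across the horizons. -/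
lemma exists_radius {M : ℝ} (hM : 0 < M) : ∃ R : ℝ → ℝ,
    (∀ x, -(2 * M) < x → 0 < R x ∧ Real.exp (R x / (2 * M)) * (R x - 2 * M) = x ∧
      ContDiffAt ℝ ∞ R x ∧ HasDerivAt R (2 * M * Real.exp (-R x / (2 * M)) / R x) x) ∧
    (∀ r, 0 < r → R (Real.exp (r / (2 * M)) * (r - 2 * M)) = r) ∧
    StrictMonoOn (fun r => Real.exp (r / (2 * M)) * (r - 2 * M)) (Ici 0) := by
  set F : ℝ → ℝ := fun r => Real.exp (r / (2 * M)) * (r - 2 * M) with hF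
  have hFs : ContDiff ℝ ∞ F := by
    have : ContDiff ℝ ∞ Real.exp := Real.contDiff_exp
    simp only [hF]
    fun_prop
  have hFd : ∀ r, HasDerivAt F (Real.exp (r / (2 * M)) * r / (2 * M)) r := by
    intro r
    have := (((hasDerivAt_id r).div_const (2 * M)).exp).mul ((hasDerivAt_id r).sub_const (2 * M))
    refine this.congr_deriv ?_
    simp only [id]
    field_simp
    ring
  have hmono : StrictMonoOn F (Ici 0) := by
    refine strictMonoOn_of_deriv_pos (convex_Ici 0) hFs.continuous.continuousOn fun r hr => ?_
    rw [interior_Ici, mem_Ioi] at hr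
    rw [(hFd r).deriv]
    positivity
  have hinj : InjOn F (Ioi 0) := hmono.injOn.mono Ioi_subset_Ici_self
  have hsurj : ∀ x, -(2 * M) < x → ∃ r ∈ Ioi (0 : ℝ), F r = x := by
    intro x hx
    have h0 : F 0 < x := by simpa [hF] using hx
    have h1 : x ≤ F (2 * M + |x|) := by
      simp only [hF, add_sub_cancel_left]
      have : 1 ≤ Real.exp ((2 * M + |x|) / (2 * M)) := Real.one_le_exp (by positivity)
      nlinarith [le_abs_self x, abs_nonneg x]
    obtain ⟨r, hr, hrx⟩ := intermediate_value_Icc (by positivity : (0 : ℝ) ≤ 2 * M + |x|)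
      hFs.continuous.continuousOn ⟨h0.le, h1⟩
    refine ⟨r, lt_of_le_of_ne hr.1 ?_, hrx⟩
    rintro rfl
    exact h0.ne hrx
  let R := invFunOn F (Ioi 0)
  have hR : ∀ x, -(2 * M) < x → 0 < R x ∧ F (R x) = x := fun x hx =>
    ⟨invFunOn_mem (hsurj x hx), invFunOn_eq (hsurj x hx)⟩
  have hRF : ∀ r, 0 < r → R (F r) = r := fun r hr => hinj.leftInvOn_invFunOn hr
  refine ⟨R, fun x hx => ?_, hRF, hmono⟩
  obtain ⟨hpos, hx'⟩ := hR x hx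
  have hne : Real.exp (R x / (2 * M)) * R x / (2 * M) ≠ 0 := by positivity
  have hsm : ContDiffAt ℝ ∞ R x := by
    have hd := (hFd (R x)).hasFDerivAt_equiv hne
    have hG := (hFs.contDiffAt (x := R x)).to_localInverse hd (by simp)
    have hstrict := (hFs.contDiffAt (x := R x)).hasStrictFDerivAt' hd (by simp)
    have hG₀ := (hFs.contDiffAt (x := R x)).localInverse_apply_image hd (by simp)
    have hright := hstrict.eventually_right_inverse
    have hcont := hG.continuousAt
    rw [hx'] at hG hright hcont hG₀
    refine hG.congr_of_eventuallyEq ?_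
    have hpos' := hcont.eventually_mem (Ioi_mem_nhds (show 0 < _ by rw [hG₀]; exact hpos))
    filter_upwards [hright, hpos'] with z hz hz'
    have := hRF _ hz'
    rw [← this]
    congr 1
    exact hz.symm
  refine ⟨hpos, hx', hsm, ?_⟩
  refine (HasDerivAt.of_local_left_inverse hsm.continuousAt (hFd (R x)) hne ?_).congr_deriv ?_
  · filter_upwards [Ioi_mem_nhds hx] with z hz
    exact (hR z hz).2
  · rw [neg_div, Real.exp_neg]
    field_simp

/-! ### Partial derivatives of functions on the plane -/

/-- Partial derivative in the first variable, as a value of the Fréchet derivative. -/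
noncomputable def dFst (f : ℝ × ℝ → ℝ) (p : ℝ × ℝ) : ℝ := fderiv ℝ f p (1, 0)

/-- Partial derivative in the second variable, as a value of the Fréchet derivative. -/
noncomputable def dSnd (f : ℝ × ℝ → ℝ) (p : ℝ × ℝ) : ℝ := fderiv ℝ f p (0, 1)

lemma contDiffOn_dFst {f : ℝ × ℝ → ℝ} {O : Set (ℝ × ℝ)} (hO : IsOpen O)
    (hf : ContDiffOn ℝ ∞ f O) : ContDiffOn ℝ ∞ (dFst f) O :=
  (hf.fderiv_of_isOpen hO (m := ∞) (by simp)).clm_apply contDiffOn_const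

lemma contDiffOn_dSnd {f : ℝ × ℝ → ℝ} {O : Set (ℝ × ℝ)} (hO : IsOpen O)
    (hf : ContDiffOn ℝ ∞ f O) : ContDiffOn ℝ ∞ (dSnd f) O :=
  (hf.fderiv_of_isOpen hO (m := ∞) (by simp)).clm_apply contDiffOn_const

lemma hasDerivAt_comp_pair {f : ℝ × ℝ → ℝ} {O : Set (ℝ × ℝ)} (hO : IsOpen O)
    (hf : ContDiffOn ℝ ∞ f O) {α β : ℝ → ℝ} {α' β' x : ℝ} (hα : HasDerivAt α α' x)
    (hβ : HasDerivAt β β' x) (hx : (α x, β x) ∈ O) :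
    HasDerivAt (fun s => f (α s, β s))
      (dFst f (α x, β x) * α' + dSnd f (α x, β x) * β') x := by
  have h1 := ((hf.contDiffAt (hO.mem_nhds hx)).differentiableAt (by simp)).hasFDerivAt
  refine (h1.comp_hasDerivAt (f := fun s => (α s, β s)) x (hα.prodMk hβ)).congr_deriv ?_
  have : ((α', β') : ℝ × ℝ) = α' • (1, 0) + β' • (0, 1) := by simp
  rw [this, map_add, map_smul, map_smul]
  simp [dFst, dSnd, mul_comm]

lemma dFst_dSnd_comm {f : ℝ × ℝ → ℝ} {O : Set (ℝ × ℝ)} (hO : IsOpen O)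
    (hf : ContDiffOn ℝ ∞ f O) {p : ℝ × ℝ} (hp : p ∈ O) :
    dFst (dSnd f) p = dSnd (dFst f) p := by
  have h1 := hf.contDiffAt (hO.mem_nhds hp)
  have key : ∀ k : ℕ, (k : ℕ∞ω) ≤ ∞ := fun k => by exact_mod_cast le_top
  have h2' : (2 : ℕ∞ω) ≤ ∞ := by
    have := key 2
    rwa [Nat.cast_ofNat] at this
  have hs : IsSymmSndFDerivAt ℝ f p := h1.isSymmSndFDerivAt (by simpa using h2')
  have h2 : DifferentiableAt ℝ (fderiv ℝ f) p :=
    (h1.fderiv_right (m := 1) (by rw [one_add_one_eq_two]; exact h2')).differentiableAt (by simp)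
  have h3 : ∀ v w : ℝ × ℝ, fderiv ℝ (fun p => fderiv ℝ f p v) p w = fderiv ℝ (fderiv ℝ f) p w v := by
    intro v w
    rw [fderiv_clm_apply h2 (differentiableAt_const v)]
    simp
  change fderiv ℝ (fun p => fderiv ℝ f p (0, 1)) p (1, 0) =
    fderiv ℝ (fun p => fderiv ℝ f p (1, 0)) p (0, 1)
  rw [h3, h3]
  exact hs.eq _ _

/-- The mode equation, rewritten in terms of Fréchet derivatives. -/
lemma mode_equation {M lam : ℝ} {u : ℝ → ℝ → ℝ} (hu : IsModeSolution M lam u) {t r : ℝ}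
    (hr : 2 * M < r) :
    -(r / (r - 2 * M)) * dFst (dFst (uncurry u)) (t, r)
      + ((r - 2 * M) / r) * dSnd (dSnd (uncurry u)) (t, r)
      + (2 * (r - M) / r ^ 2) * dSnd (uncurry u) (t, r) - lam ^ 2 / r ^ 2 * u t r = 0 := by
  have hO : IsOpen ((univ : Set ℝ) ×ˢ Ioi (2 * M)) := isOpen_univ.prod isOpen_Ioi
  have h1 : ∀ s, ∀ z, 2 * M < z → pdt u s z = dFst (uncurry u) (s, z) := fun s z hz => by
    have := hasDerivAt_comp_pair hO hu.1 (hasDerivAt_id s) (hasDerivAt_const s z) ⟨mem_univ _, hz⟩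
    rw [pdt]
    simpa using this.deriv
  have h2 : ∀ s, ∀ z, 2 * M < z → pdr u s z = dSnd (uncurry u) (s, z) := fun s z hz => by
    have := hasDerivAt_comp_pair hO hu.1 (hasDerivAt_const z s) (hasDerivAt_id z) ⟨mem_univ _, hz⟩
    rw [pdr]
    simpa using this.deriv
  have h3 : pdtt u t r = dFst (dFst (uncurry u)) (t, r) := by
    have := hasDerivAt_comp_pair hO (contDiffOn_dFst hO hu.1) (hasDerivAt_id t)
      (hasDerivAt_const t r) ⟨mem_univ _, hr⟩
    have e : (fun s => pdt u s r) = fun s => dFst (uncurry u) (s, r) := funext fun s => h1 s r hr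
    rw [pdtt, e]
    simpa using this.deriv
  have h4 : pdrr u t r = dSnd (dSnd (uncurry u)) (t, r) := by
    have := hasDerivAt_comp_pair hO (contDiffOn_dSnd hO hu.1) (hasDerivAt_const r t)
      (hasDerivAt_id r) ⟨mem_univ _, hr⟩
    have e : (fun s => pdr u t s) =ᶠ[nhds r] fun s => dSnd (uncurry u) (t, s) := by
      filter_upwards [Ioi_mem_nhds hr] with s hs using h2 t s hs
    rw [pdrr, e.deriv_eq]
    simpa using this.deriv
  have := hu.2 t r hr
  rwa [h3, h4, h2 t r hr] at this

/-! ### The Kruskal form of the mode equation -/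

/-- The algebraic identity `∂_μ ∂_ν (r u) = potential · r u`. Here `a = μ`, `b = ν`,
`e = e^{-r/(2M)}`, `P` and `P'` are the first two derivatives of the radius with respect to `μ ν`,
and `ut`, `ur`, `utt`, `utr`, `urr` are the partial derivatives of `u`. The left-hand side is the
chain-rule expansion of `∂_μ ∂_ν (r u)`. -/
lemma kruskal_algebra {M lam a b R e u ut ur utt utr urr : ℝ} (ha : 0 < a) (hb : 0 < b)
    (hR : 0 < R) (he : 0 < e) (hx : e * (a * b) = R - 2 * M)
    (h : -(R / (R - 2 * M)) * utt + ((R - 2 * M) / R) * urr + (2 * (R - M) / R ^ 2) * ur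
      - lam ^ 2 / R ^ 2 * u = 0) (P P' : ℝ) (hP : P = 2 * M * e / R)
    (hP' : P' = -(P * e / R) - 2 * M * e * P / R ^ 2) :
    (P' * b * a + P) * u + P * a * (ut * (2 * M / a) + ur * (P * b)) +
      (P * b * (ut * (-(2 * M / b)) + ur * (P * a)) +
        R * ((utt * (2 * M / a) + utr * (P * b)) * (-(2 * M / b)) +
          ((utr * (2 * M / a) + urr * (P * b)) * (P * a) + ur * (P' * b * a + P)))) =
      (8 * M ^ 3 / R ^ 4 + 4 * M ^ 2 * lam ^ 2 / R ^ 3) * e * (R * u) := by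
  have hM : M = (R - e * (a * b)) / 2 := by linarith
  have hD : R - 2 * M ≠ 0 := by rw [← hx]; positivity
  have hutt : utt = (R - 2 * M) / R * (((R - 2 * M) / R) * urr + (2 * (R - M) / R ^ 2) * ur
      - lam ^ 2 / R ^ 2 * u) := by
    field_simp at h ⊢
    linear_combination -h
  subst hP' hP hutt hM
  field_simp
  ring


section KruskalForm

variable {M lam : ℝ} {u : ℝ → ℝ → ℝ} {R : ℝ → ℝ}

/-- The function `r u` in Kruskal coordinates `a = μ`, `b = ν`: the area radius is `R (μ ν)` and the
time is `2M (log μ - log ν)`. -/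
noncomputable def kru (M : ℝ) (R : ℝ → ℝ) (u : ℝ → ℝ → ℝ) (a b : ℝ) : ℝ :=
  R (a * b) * u (2 * M * (Real.log a - Real.log b)) (R (a * b))

/-- The derivative of the radius `R` as a function of `x = μ ν`. -/
noncomputable def radiusDeriv (M : ℝ) (R : ℝ → ℝ) (x : ℝ) : ℝ :=
  2 * M * Real.exp (-R x / (2 * M)) / R x

/-- The partial derivative `∂_μ (r u)` in Kruskal coordinates. -/
noncomputable def kruFst (M : ℝ) (R : ℝ → ℝ) (u : ℝ → ℝ → ℝ) (a b : ℝ) : ℝ :=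
  radiusDeriv M R (a * b) * b * u (2 * M * (Real.log a - Real.log b)) (R (a * b)) +
    R (a * b) *
      (dFst (uncurry u) (2 * M * (Real.log a - Real.log b), R (a * b)) * (2 * M / a) +
        dSnd (uncurry u) (2 * M * (Real.log a - Real.log b), R (a * b)) *
          (radiusDeriv M R (a * b) * b))

/-- The partial derivative `∂_ν (r u)` in Kruskal coordinates. -/
noncomputable def kruSnd (M : ℝ) (R : ℝ → ℝ) (u : ℝ → ℝ → ℝ) (a b : ℝ) : ℝ :=
  radiusDeriv M R (a * b) * a * u (2 * M * (Real.log a - Real.log b)) (R (a * b)) +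
    R (a * b) *
      (dFst (uncurry u) (2 * M * (Real.log a - Real.log b), R (a * b)) * (-(2 * M / b)) +
        dSnd (uncurry u) (2 * M * (Real.log a - Real.log b), R (a * b)) *
          (radiusDeriv M R (a * b) * a))

/-- The factor in `∂_μ ∂_ν (r u) = potential(μ ν) · (r u)`. -/
noncomputable def potential (M lam : ℝ) (R : ℝ → ℝ) (x : ℝ) : ℝ :=
  (8 * M ^ 3 / R x ^ 4 + 4 * M ^ 2 * lam ^ 2 / R x ^ 3) * Real.exp (-R x / (2 * M))

/-- `R` is a smooth positive inverse of `r ↦ e^{r/(2M)} (r - 2M)` on `(-2M, ∞)`, so that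
`R (μ ν)` is the area radius. -/
def IsRadius (M : ℝ) (R : ℝ → ℝ) : Prop :=
  ∀ x, -(2 * M) < x → 0 < R x ∧ Real.exp (R x / (2 * M)) * (R x - 2 * M) = x ∧
      ContDiffAt ℝ ∞ R x ∧ HasDerivAt R (radiusDeriv M R x) x

lemma IsRadius.exp_mul (hR : IsRadius M R) {x : ℝ} (hx : -(2 * M) < x) :
    Real.exp (-R x / (2 * M)) * x = R x - 2 * M := by
  have h := (hR x hx).2.1
  rw [neg_div, Real.exp_neg, inv_mul_eq_iff_eq_mul₀ (Real.exp_pos _).ne', h]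

lemma IsRadius.two_mul_lt (hR : IsRadius M R) (hM : 0 < M) {x : ℝ} (hx : 0 < x) :
    2 * M < R x := by
  have := hR.exp_mul (x := x) (by linarith)
  have h2 : 0 < Real.exp (-R x / (2 * M)) * x := by positivity
  linarith

lemma IsRadius.hasDerivAt_deriv (hM : 0 < M) (hR : IsRadius M R) {x : ℝ} (hx : -(2 * M) < x) :
    HasDerivAt (radiusDeriv M R)
      (-(radiusDeriv M R x * Real.exp (-R x / (2 * M)) / R x) -
        2 * M * Real.exp (-R x / (2 * M)) * radiusDeriv M R x / R x ^ 2) x := by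
  obtain ⟨h0, -, -, h3⟩ := hR x hx
  have := (((h3.neg.div_const (2 * M)).exp.const_mul (2 * M)).div h3 h0.ne')
  refine this.congr_deriv ?_
  simp only [Pi.neg_apply]
  field_simp

lemma hasDerivAt_time_fst (M : ℝ) {a b : ℝ} (ha : 0 < a) :
    HasDerivAt (fun s => 2 * M * (Real.log s - Real.log b)) (2 * M / a) a := by
  refine (((Real.hasDerivAt_log ha.ne').sub_const _).const_mul (2 * M)).congr_deriv ?_
  rw [div_eq_mul_inv]

lemma hasDerivAt_time_snd (M : ℝ) {a b : ℝ} (hb : 0 < b) :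
    HasDerivAt (fun s => 2 * M * (Real.log a - Real.log s)) (-(2 * M / b)) b := by
  refine (((Real.hasDerivAt_log hb.ne').const_sub _).const_mul (2 * M)).congr_deriv ?_
  rw [div_eq_mul_inv]; ring

lemma hasDerivAt_comp_mul_fst {f : ℝ → ℝ} {f' a b : ℝ} (h : HasDerivAt f f' (a * b)) :
    HasDerivAt (fun s => f (s * b)) (f' * b) a :=
  h.comp a (hasDerivAt_mul_const b)

lemma hasDerivAt_comp_mul_snd {f : ℝ → ℝ} {f' a b : ℝ} (h : HasDerivAt f f' (a * b)) :
    HasDerivAt (fun s => f (a * s)) (f' * a) b :=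
  h.comp b (hasDerivAt_const_mul a)

variable (hM : 0 < M) (hR : IsRadius M R) (hu : IsModeSolution M lam u) {a b : ℝ} (ha : 0 < a)
  (hb : 0 < b)

include hM hR hu ha hb

lemma hasDerivAt_kru_fst : HasDerivAt (fun s => kru M R u s b) (kruFst M R u a b) a := by
  have hx : 0 < a * b := mul_pos ha hb
  have hO : IsOpen ((univ : Set ℝ) ×ˢ Ioi (2 * M)) := isOpen_univ.prod isOpen_Ioi
  have h1 := hasDerivAt_comp_mul_fst (hR (a * b) (by linarith)).2.2.2
  exact h1.mul (hasDerivAt_comp_pair hO hu.1 (hasDerivAt_time_fst M (b := b) ha) h1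
    ⟨mem_univ _, hR.two_mul_lt hM hx⟩)

lemma hasDerivAt_kru_snd : HasDerivAt (fun s => kru M R u a s) (kruSnd M R u a b) b := by
  have hx : 0 < a * b := mul_pos ha hb
  have hO : IsOpen ((univ : Set ℝ) ×ˢ Ioi (2 * M)) := isOpen_univ.prod isOpen_Ioi
  have h1 := hasDerivAt_comp_mul_snd (hR (a * b) (by linarith)).2.2.2
  exact h1.mul (hasDerivAt_comp_pair hO hu.1 (hasDerivAt_time_snd M (a := a) hb) h1
    ⟨mem_univ _, hR.two_mul_lt hM hx⟩)

lemma hasDerivAt_kruSnd_fst :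
    HasDerivAt (fun s => kruSnd M R u s b) (potential M lam R (a * b) * kru M R u a b) a := by
  have hx : 0 < a * b := mul_pos ha hb
  have hx' : -(2 * M) < a * b := by linarith
  have hO : IsOpen ((univ : Set ℝ) ×ˢ Ioi (2 * M)) := isOpen_univ.prod isOpen_Ioi
  have hmem : (2 * M * (Real.log a - Real.log b), R (a * b)) ∈ (univ : Set ℝ) ×ˢ Ioi (2 * M) :=
    ⟨mem_univ _, hR.two_mul_lt hM hx⟩
  have hT := hasDerivAt_time_fst M (b := b) ha
  have h1 := hasDerivAt_comp_mul_fst (hR (a * b) hx').2.2.2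
  have h2 := hasDerivAt_comp_mul_fst (hR.hasDerivAt_deriv hM hx')
  have hu0 := hasDerivAt_comp_pair hO hu.1 hT h1 hmem
  have hu1 := hasDerivAt_comp_pair hO (contDiffOn_dFst hO hu.1) hT h1 hmem
  have hu2 := hasDerivAt_comp_pair hO (contDiffOn_dSnd hO hu.1) hT h1 hmem
  have h3 := h2.mul (hasDerivAt_id a)
  refine ((h3.mul hu0).add (h1.mul ((hu1.mul_const (-(2 * M / b))).add (hu2.mul h3)))).congr_deriv ?_
  rw [dFst_dSnd_comm hO hu.1 hmem]
  have := kruskal_algebra (utr := dSnd (dFst (uncurry u)) (2 * M * (Real.log a - Real.log b), R (a * b)))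
    (ut := dFst (uncurry u) (2 * M * (Real.log a - Real.log b), R (a * b)))
    ha hb (hR _ hx').1 (Real.exp_pos _) (hR.exp_mul hx')
    (mode_equation (t := 2 * M * (Real.log a - Real.log b)) hu hmem.2) (radiusDeriv M R (a * b)) _ rfl rfl
  simp only [potential, kru]
  rw [← this]
  simp [uncurry]

lemma hasDerivAt_kruFst_snd :
    HasDerivAt (fun s => kruFst M R u a s) (potential M lam R (a * b) * kru M R u a b) b := by
  have hx : 0 < a * b := mul_pos ha hb
  have hx' : -(2 * M) < a * b := by linarith
  have hO : IsOpen ((univ : Set ℝ) ×ˢ Ioi (2 * M)) := isOpen_univ.prod isOpen_Ioi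
  have hmem : (2 * M * (Real.log a - Real.log b), R (a * b)) ∈ (univ : Set ℝ) ×ˢ Ioi (2 * M) :=
    ⟨mem_univ _, hR.two_mul_lt hM hx⟩
  have hT := hasDerivAt_time_snd M (a := a) hb
  have h1 := hasDerivAt_comp_mul_snd (hR (a * b) hx').2.2.2
  have h2 := hasDerivAt_comp_mul_snd (hR.hasDerivAt_deriv hM hx')
  have hu0 := hasDerivAt_comp_pair hO hu.1 hT h1 hmem
  have hu1 := hasDerivAt_comp_pair hO (contDiffOn_dFst hO hu.1) hT h1 hmem
  have hu2 := hasDerivAt_comp_pair hO (contDiffOn_dSnd hO hu.1) hT h1 hmem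
  have h3 := h2.mul (hasDerivAt_id b)
  refine ((h3.mul hu0).add (h1.mul ((hu1.mul_const (2 * M / a)).add (hu2.mul h3)))).congr_deriv ?_
  rw [dFst_dSnd_comm hO hu.1 hmem]
  have := kruskal_algebra (utr := dSnd (dFst (uncurry u)) (2 * M * (Real.log a - Real.log b), R (a * b)))
    (ut := dFst (uncurry u) (2 * M * (Real.log a - Real.log b), R (a * b)))
    ha hb (hR _ hx').1 (Real.exp_pos _) (hR.exp_mul hx')
    (mode_equation (t := 2 * M * (Real.log a - Real.log b)) hu hmem.2) (radiusDeriv M R (a * b)) _ rfl rfl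
  simp only [potential, kru]
  rw [← this]
  simp [uncurry]
  ring

omit ha hb in
lemma contDiffOn_kru : ContDiffOn ℝ ∞ (uncurry (kru M R u)) (Ioi 0 ×ˢ Ioi 0) := by
  have hO : IsOpen ((univ : Set ℝ) ×ˢ Ioi (2 * M)) := isOpen_univ.prod isOpen_Ioi
  rintro ⟨a, b⟩ ⟨ha, hb⟩
  simp only [mem_Ioi] at ha hb
  have hx : 0 < a * b := mul_pos ha hb
  have h1 : ContDiffAt ℝ ∞ (fun p : ℝ × ℝ => R (p.1 * p.2)) (a, b) :=
    ContDiffAt.comp (g := R) (a, b) (hR (a * b) (by linarith)).2.2.1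
      (contDiffAt_fst.mul contDiffAt_snd)
  have h2 : ContDiffAt ℝ ∞ (fun p : ℝ × ℝ => 2 * M * (Real.log p.1 - Real.log p.2)) (a, b) :=
    contDiffAt_const.mul ((contDiffAt_fst.log ha.ne').sub (contDiffAt_snd.log hb.ne'))
  have h3 : ContDiffAt ℝ ∞ (uncurry u) (2 * M * (Real.log a - Real.log b), R (a * b)) :=
    hu.1.contDiffAt (hO.mem_nhds ⟨mem_univ _, hR.two_mul_lt hM hx⟩)
  exact (h1.mul (ContDiffAt.comp (g := uncurry u) (a, b) h3 (h2.prodMk h1))).contDiffWithinAt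

end KruskalForm

/-- The potential coincides on `[0, ∞)`, the range of `μ ν` on the closed quadrant, with a function
that is smooth on all of `ℝ`; it is cut off below `-M`, since `R` is only controlled on
`(-2M, ∞)`. -/
lemma exists_smooth_potential {M : ℝ} (hM : 0 < M) (lam : ℝ) {R : ℝ → ℝ} (hR : IsRadius M R) :
    ∃ Q : ℝ → ℝ, ContDiff ℝ ∞ Q ∧ ∀ x, 0 ≤ x → Q x = potential M lam R x := by
  refine ⟨fun x => Real.smoothTransition (1 + x / M) * potential M lam R x, ?_, fun x hx => ?_⟩
  · rw [contDiff_iff_contDiffAt]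
    intro x
    rcases lt_or_ge x (-M) with h | h
    · refine (contDiffAt_const (c := (0 : ℝ))).congr_of_eventuallyEq ?_
      filter_upwards [Iio_mem_nhds h] with z hz
      have : 1 + z / M ≤ 0 := by
        have : z / M ≤ -1 := by rw [div_le_iff₀ hM]; linarith [mem_Iio.1 hz]
        linarith
      rw [Real.smoothTransition.zero_of_nonpos this, zero_mul]
    · obtain ⟨h0, -, h2, -⟩ := hR x (by linarith)
      have h3 : ContDiffAt ℝ ∞ (fun x => Real.smoothTransition (1 + x / M)) x :=
        (Real.smoothTransition.contDiff (n := ⊤)).contDiffAt.comp x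
          (contDiffAt_const.add (contDiffAt_id.div_const M))
      refine h3.mul ?_
      unfold potential
      exact ((contDiffAt_const.div (h2.pow 4) (by positivity)).add
        (contDiffAt_const.div (h2.pow 3) (by positivity))).mul (h2.neg.div_const _).exp
  · have : 1 ≤ 1 + x / M := by have := div_nonneg hx hM.le; linarith
    beta_reduce
    rw [Real.smoothTransition.one_of_one_le this, one_mul]

/-! ### Smoothness across the horizons -/

/-- Lemma 5.3 (single mode): for smooth compactly supported data, the solution is
jointly smooth in the Kruskal coordinates `μ = e^{(t+r_*(r))/(4M)}`,
`ν = e^{−(t−r_*(r))/(4M)}`, up to both event horizons. -/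
theorem smooth_in_kruskal_coordinates
    (M lam : ℝ) (hM : 0 < M) (hlam : 0 ≤ lam)
    (u : ℝ → ℝ → ℝ) (hu : IsModeSolution M lam u)
    (hsupp : ∃ r₁ r₂ : ℝ, 2*M < r₁ ∧ r₁ ≤ r₂ ∧
      ∀ r : ℝ, 2*M < r → r ∉ Set.Icc r₁ r₂ → u 0 r = 0 ∧ pdt u 0 r = 0) :
    ∃ w : ℝ → ℝ → ℝ,
      ContDiffOn ℝ ∞ (Function.uncurry w) (Set.Ici (0:ℝ) ×ˢ Set.Ici (0:ℝ)) ∧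
      ∀ t r : ℝ, 2*M < r →
        w (Real.exp ((t + rstar M r)/(4*M))) (Real.exp (-(t - rstar M r)/(4*M))) = u t r := by
  obtain ⟨R, hR, hRF, hmono⟩ := exists_radius hM
  replace hR : IsRadius M R := hR
  obtain ⟨Q, hQ, hQR⟩ := exists_smooth_potential hM lam hR
  obtain ⟨r₁, r₂, hr₁, -, hsupp⟩ := hsupp
  have hO : IsOpen ((univ : Set ℝ) ×ˢ Ioi (2 * M)) := isOpen_univ.prod isOpen_Ioi
  have hdata : ∀ r ∈ Ioo (2 * M) r₁, u 0 r = 0 ∧ dFst (uncurry u) (0, r) = 0 ∧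
      dSnd (uncurry u) (0, r) = 0 := by
    intro r hr
    obtain ⟨h1, h2⟩ := hsupp r hr.1 fun h => absurd h.1 (not_le.2 hr.2)
    refine ⟨h1, ?_, ?_⟩
    · have := hasDerivAt_comp_pair hO hu.1 (hasDerivAt_id 0) (hasDerivAt_const 0 r)
        ⟨mem_univ _, hr.1⟩
      have h5 : HasDerivAt (fun s => u s r) (dFst (uncurry u) (0, r)) 0 := by simpa using this
      rw [← h5.deriv]
      exact h2
    · have h3 := hasDerivAt_comp_pair hO hu.1 (hasDerivAt_const r 0) (hasDerivAt_id r)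
        ⟨mem_univ _, hr.1⟩
      have h4 : HasDerivAt (fun s => uncurry u (0, id s)) 0 r := by
        refine (hasDerivAt_const r (0 : ℝ)).congr_of_eventuallyEq ?_
        filter_upwards [Ioo_mem_nhds hr.1 hr.2] with s hs
        exact (hsupp s hs.1 fun h => absurd h.1 (not_le.2 hs.2)).1
      simpa using h3.unique h4
  have hF₁ : 0 < Real.exp (r₁ / (2 * M)) * (r₁ - 2 * M) :=
    mul_pos (Real.exp_pos _) (by linarith)
  -- The diagonal `μ = ν` is the initial slice `t = 0`.
  have hdiag : ∀ s ∈ Ioo 0 √(Real.exp (r₁ / (2 * M)) * (r₁ - 2 * M)),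
      kru M R u s s = 0 ∧ kruSnd M R u s s = 0 := by
    intro s hs
    have hss : 0 < s * s := mul_pos hs.1 hs.1
    have hlt : R (s * s) < r₁ := by
      have h1 := hR (s * s) (by linarith)
      rw [← hmono.lt_iff_lt (show 0 ≤ R (s * s) from h1.1.le) (show 0 ≤ r₁ by linarith)]
      rw [h1.2.1, ← sq]
      exact (Real.lt_sqrt hs.1.le).1 hs.2
    obtain ⟨h1, h2, h3⟩ := hdata _ ⟨hR.two_mul_lt hM hss, hlt⟩
    simp [kru, kruSnd, h1, h2, h3]
  have hmain := contDiffOn_extendFrom_quadrant (q := fun a b => Q (a * b))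
    (hQ.comp (contDiff_fst.mul contDiff_snd)) (contDiffOn_kru hM hR hu)
    (fun a b ha hb => hasDerivAt_kru_snd hM hR hu ha hb)
    (fun a b ha hb => by
      rw [hQR _ (mul_pos ha hb).le]; exact hasDerivAt_kruSnd_fst hM hR hu ha hb)
    (fun a b ha hb => hasDerivAt_kru_fst hM hR hu ha hb)
    (fun a b ha hb => by
      rw [hQR _ (mul_pos ha hb).le]; exact hasDerivAt_kruFst_snd hM hR hu ha hb)
    (Real.sqrt_pos.2 hF₁) hdiag
  refine ⟨fun a b => extendFrom (Ioi 0 ×ˢ Ioi 0) (uncurry (kru M R u)) (a, b) / R (a * b), ?_, ?_⟩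
  · refine hmain.div ?_ ?_
    · rintro ⟨a, b⟩ ⟨ha, hb⟩
      have hx : 0 ≤ a * b := mul_nonneg ha hb
      exact (ContDiffAt.comp (g := R) (a, b) (hR (a * b) (by linarith)).2.2.1
        (contDiffAt_fst.mul contDiffAt_snd)).contDiffWithinAt
    · rintro ⟨a, b⟩ ⟨ha, hb⟩
      have hx : 0 ≤ a * b := mul_nonneg ha hb
      exact (hR (a * b) (by linarith)).1.ne'
  · intro t r hr
    have hprod : Real.exp ((t + rstar M r) / (4 * M)) * Real.exp (-(t - rstar M r) / (4 * M)) =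
        Real.exp (r / (2 * M)) * (r - 2 * M) := by
      rw [← Real.exp_add]
      conv_rhs => rw [← Real.exp_log (by linarith : 0 < r - 2 * M), ← Real.exp_add]
      congr 1
      rw [rstar]
      field_simp
      ring
    have htime : 2 * M * ((t + rstar M r) / (4 * M) - -(t - rstar M r) / (4 * M)) = t := by
      field_simp
      ring
    have hext : extendFrom (Ioi 0 ×ˢ Ioi 0) (uncurry (kru M R u))
        (Real.exp ((t + rstar M r) / (4 * M)), Real.exp (-(t - rstar M r) / (4 * M))) =
        uncurry (kru M R u)
          (Real.exp ((t + rstar M r) / (4 * M)), Real.exp (-(t - rstar M r) / (4 * M))) := by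
      have hmem : (Real.exp ((t + rstar M r) / (4 * M)), Real.exp (-(t - rstar M r) / (4 * M))) ∈
          Ioi (0 : ℝ) ×ˢ Ioi (0 : ℝ) := ⟨Real.exp_pos _, Real.exp_pos _⟩
      exact extendFrom_eq (subset_closure hmem) ((contDiffOn_kru hM hR hu).continuousOn _ hmem)
    have hr0 : 0 < r := by linarith
    beta_reduce
    rw [hext]
    simp only [uncurry, kru, hprod, hRF r hr0, Real.log_exp, htime]
    field_simp
end
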